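/- For every u ∈ ℂ with |u| ≤ u_c, the series Z_q(u) := Σ_{p≥0} z_{p,q}·u^p converges absolutely for every q ≥ 0, the series A(u) := Σ_{p≥0} a_p·u^p converges absolutely, and Z_q(u) ~ (A(u)/Γ(−4/3)) · u_c^{−q} · q^{−7/3} as q → ∞, where Γ denotes the Gamma function. -/

import Mathlib

noncomputable def nuc : ℝ := 1 + 2 * Real.sqrt 7

noncomputable def tc : ℝ := Real.sqrt 10 / (8 * (7 + Real.sqrt 7) ^ ((3:ℝ)/2))

noncomputable def uc : ℝ := (6/5) * (7 + Real.sqrt 7) * tc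

/-- The rational parametrization `û` of the `u`-variable. -/
noncomputable def uhat (H : ℂ) : ℂ :=
  ((uc : ℂ) / 3) * H * (10 - 12 * H + 6 * H ^ 2 - H ^ 3)

/-- The rational parametrization `Ẑ₀`. -/
noncomputable def Z0hat (H : ℂ) : ℂ :=
  (1/10) * (1 - (1 - (Real.sqrt 7 : ℂ)) * H + 3 * H ^ 2 - H ^ 3)
    * (10 - 12 * H + 6 * H ^ 2 - H ^ 3)

/-- The rational parametrization `Ẑ₁`. -/
noncomputable def Z1hat (H : ℂ) : ℂ :=
  (3 / (10 * (uc : ℂ))) *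
    ((Real.sqrt 7 : ℂ) - 1 + H - 3 * (4 - 3 * H + H ^ 2) / (10 - 12 * H + 6 * H ^ 2 - H ^ 3))

/-- The rational parametrization `Â`. -/
noncomputable def Ahat (H : ℂ) : ℂ :=
  (1/10) * ((((3:ℝ)/2) ^ ((7:ℝ)/3) : ℝ) : ℂ) * (9 - 8 * H + 3 * H ^ 2) / (3 - 3 * H + H ^ 2) ^ 2

/-!
In the variable `k = 1 - H` the parametrization becomes `û (1 - k) = u_c (1 - k ^ 3 (2 + k) / 3)`,
which maps a region of the sector `|arg k| < π / 6` biholomorphically onto the disc `|u| < u_c` and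
sends the corner `k = 0` to the singularity `u_c`, where `k` behaves like `(1 - u / u_c) ^ (1 / 3)`.
Solving the functional equation makes `Z` a rational function of the two parameters `h` and `k`:
a spurious factor of the kernel cancels, and the remaining denominator vanishes only at the corner
`h = k = 0`. Since all coefficients are nonnegative, boundedness of this function on the diagonal
gives absolute convergence on the closed polydisc. For fixed `h` its expansion at `k = 0` has only
terms in `1`, `k ^ 3 (2 + k) / 3` and `k ^ 4, k ^ 5, …`; the first two are polynomial in `v`, and
`k ^ 4`, that is `(1 - v / u_c) ^ (4 / 3)`, produces `q ^ (-7 / 3) / Γ (-4 / 3)`, with coefficient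
`Â (1 - h)`.
-/

open Filter Topology Metric Asymptotics

section PowerSeries

/-- The `n`-th Taylor coefficient of `f` at `0`. -/
noncomputable def taylorCoeff (f : ℂ → ℂ) (n : ℕ) : ℂ := (n.factorial : ℂ)⁻¹ * iteratedDeriv n f 0

variable {f g : ℂ → ℂ} {r : ℝ}

lemma hasSum_taylorCoeff (hf : DifferentiableOn ℂ f (ball 0 r)) {y : ℂ} (hy : y ∈ ball 0 r) :
    HasSum (fun n => taylorCoeff f n * y ^ n) (f y) := by
  refine (Complex.hasSum_taylorSeries_on_ball hf hy).congr_fun fun n => ?_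
  simp only [taylorCoeff, sub_zero, smul_eq_mul]
  ring

lemma hasFPowerSeriesAt_ofScalars {c : ℕ → ℂ}
    (h : ∀ᶠ y in 𝓝 (0 : ℂ), HasSum (fun n => c n * y ^ n) (f y)) :
    HasFPowerSeriesAt f (FormalMultilinearSeries.ofScalars ℂ c) 0 := by
  rw [hasFPowerSeriesAt_iff]
  filter_upwards [h] with y hy
  simpa [FormalMultilinearSeries.coeff_ofScalars, mul_comm] using hy

lemma taylorCoeff_eq_of_hasFPowerSeriesAt {c : ℕ → ℂ}
    (h : HasFPowerSeriesAt f (FormalMultilinearSeries.ofScalars ℂ c) 0) : taylorCoeff f = c := by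
  obtain ⟨r, hr⟩ := h
  funext n
  have hn := congrArg (fun p => FormalMultilinearSeries.coeff p n)
    ((AnalyticAt.hasFPowerSeriesAt ⟨_, r, hr⟩).eq_formalMultilinearSeries ⟨r, hr⟩)
  simpa [FormalMultilinearSeries.coeff_ofScalars, taylorCoeff, div_eq_inv_mul] using hn

lemma taylorCoeff_eq_of_hasSum {c : ℕ → ℂ}
    (h : ∀ᶠ y in 𝓝 (0 : ℂ), HasSum (fun n => c n * y ^ n) (f y)) : taylorCoeff f = c :=
  taylorCoeff_eq_of_hasFPowerSeriesAt (hasFPowerSeriesAt_ofScalars h)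

lemma eventually_hasSum_of_eventually_nhdsNE {c : ℕ → ℂ} (hf : ContinuousAt f 0)
    (h : ∀ᶠ y in 𝓝[≠] (0 : ℂ), HasSum (fun n => c n * y ^ n) (f y)) :
    ∀ᶠ y in 𝓝 (0 : ℂ), HasSum (fun n => c n * y ^ n) (f y) := by
  have hsum : ∀ᶠ y in 𝓝 (0 : ℂ), HasSum (fun n => c n * y ^ n) (∑' n, c n * y ^ n) := by
    filter_upwards [eventually_nhdsWithin_iff.1 h] with y hy
    rcases eq_or_ne y 0 with rfl | hy0
    · exact (summable_of_ne_finset_zero (s := {0}) fun n hn => by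
        rw [zero_pow (by simpa using hn), mul_zero]).hasSum
    · exact (hy hy0).summable.hasSum
  have hcont := (hasFPowerSeriesAt_ofScalars hsum).continuousAt
  have heq := (hcont.eventuallyEq_nhds_iff_eventuallyEq_nhdsNE hf).1 (h.mono fun y hy => hy.tsum_eq)
  filter_upwards [hsum, heq] with y hy hyf
  rwa [hyf] at hy

lemma taylorCoeff_congr (h : f =ᶠ[𝓝 0] g) : taylorCoeff f = taylorCoeff g :=
  funext fun n => by rw [taylorCoeff, h.iteratedDeriv_eq, taylorCoeff]

lemma taylorCoeff_add (hf : AnalyticAt ℂ f 0) (hg : AnalyticAt ℂ g 0) (n : ℕ) :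
    taylorCoeff (fun y => f y + g y) n = taylorCoeff f n + taylorCoeff g n := by
  rw [taylorCoeff, iteratedDeriv_fun_add hf.contDiffAt hg.contDiffAt, mul_add]
  rfl

lemma taylorCoeff_const_mul (b : ℂ) (f : ℂ → ℂ) (n : ℕ) :
    taylorCoeff (fun y => b * f y) n = b * taylorCoeff f n := by
  rw [taylorCoeff, iteratedDeriv_const_mul_field, taylorCoeff, mul_left_comm]

lemma taylorCoeff_of_hasDerivAt (h : ∀ᶠ y in 𝓝 (0 : ℂ), HasDerivAt f (g y) y) (n : ℕ) :
    taylorCoeff g n = (n + 1) * taylorCoeff f (n + 1) := by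
  have hg : g =ᶠ[𝓝 0] deriv f := h.mono fun y hy => hy.deriv.symm
  have hn : (n.factorial : ℂ) ≠ 0 := by exact_mod_cast n.factorial_ne_zero
  have hn1 : (n : ℂ) + 1 ≠ 0 := by exact_mod_cast n.succ_ne_zero
  rw [taylorCoeff, taylorCoeff, hg.iteratedDeriv_eq, iteratedDeriv_succ', Nat.factorial_succ]
  push_cast
  field_simp

lemma taylorCoeff_mul_of_hasDerivAt (hr : 0 < r)
    (h : ∀ y ∈ ball (0 : ℂ) r, HasDerivAt f (g y) y) (n : ℕ) :
    taylorCoeff (fun y => y * g y) n = n * taylorCoeff f n := by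
  have hball : ball (0 : ℂ) r ∈ 𝓝 0 := ball_mem_nhds 0 hr
  have hg : DifferentiableOn ℂ g (ball 0 r) :=
    (DifferentiableOn.deriv (fun y hy => (h y hy).differentiableAt.differentiableWithinAt)
      isOpen_ball).congr fun y hy => (h y hy).deriv.symm
  have hsum : ∀ᶠ y in 𝓝 (0 : ℂ), HasSum (fun n : ℕ => n * taylorCoeff f n * y ^ n) (y * g y) := by
    filter_upwards [hball] with y hy
    have hy := (hasSum_taylorCoeff hg hy).mul_left y
    simp only [taylorCoeff_of_hasDerivAt (mem_of_superset hball h)] at hy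
    rw [← hasSum_nat_add_iff' 1]
    simp only [Finset.sum_range_one, Nat.cast_zero, zero_mul, sub_zero]
    refine hy.congr_fun fun n => ?_
    push_cast
    ring
  exact congrFun (taylorCoeff_eq_of_hasSum hsum) n

lemma norm_taylorCoeff_mul_pow_le (hr : 0 < r) (hf : DifferentiableOn ℂ f (ball 0 r)) {M : ℝ}
    (hM : ∀ y ∈ ball (0 : ℂ) r, ‖f y‖ ≤ M) (n : ℕ) : ‖taylorCoeff f n‖ * r ^ n ≤ M := by
  have hlt : ∀ s ∈ Set.Ioo 0 r, ‖taylorCoeff f n‖ * s ^ n ≤ M := by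
    intro s hs
    have hcauchy := Complex.norm_iteratedDeriv_le_of_forall_mem_sphere_norm_le n hs.1
      ((hf.mono (closedBall_subset_ball hs.2)).diffContOnCl_ball subset_rfl)
      fun z hz => hM z (sphere_subset_closedBall.trans (closedBall_subset_ball hs.2) hz)
    have hn : (0 : ℝ) < n.factorial := by exact_mod_cast n.factorial_pos
    rw [le_div_iff₀ (pow_pos hs.1 n)] at hcauchy
    rwa [taylorCoeff, norm_mul, norm_inv, Complex.norm_natCast, mul_assoc, inv_mul_le_iff₀ hn]
  have hcont : Continuous fun s : ℝ => ‖taylorCoeff f n‖ * s ^ n := by fun_prop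
  exact le_of_tendsto hcont.continuousWithinAt (mem_of_superset (Ioo_mem_nhdsLT hr) hlt)

lemma summable_mul_pow_of_bounded (hr : 0 < r) (hf : DifferentiableOn ℂ f (ball 0 r)) {M : ℝ}
    (hM : ∀ y ∈ ball (0 : ℂ) r, ‖f y‖ ≤ M) {c : ℕ → ℝ} (hc : ∀ n, 0 ≤ c n)
    (h : ∀ᶠ y in 𝓝 (0 : ℂ), HasSum (fun n => (c n : ℂ) * y ^ n) (f y)) :
    Summable fun n => c n * r ^ n := by
  have hct := taylorCoeff_eq_of_hasSum h
  refine summable_of_sum_range_le (c := M)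
    (fun n => mul_nonneg (hc n) (pow_nonneg hr.le n)) fun N => ?_
  have hlt : ∀ s ∈ Set.Ioo 0 r, ∑ n ∈ Finset.range N, c n * s ^ n ≤ M := by
    intro s hs
    have hsr : (s : ℂ) ∈ ball (0 : ℂ) r := by
      rw [mem_ball_zero_iff, Complex.norm_real, Real.norm_of_nonneg hs.1.le]
      exact hs.2
    have hsum : HasSum (fun n => c n * s ^ n) (f s).re := by
      have := hasSum_taylorCoeff hf hsr
      rw [hct] at this
      simpa only [← Complex.ofReal_pow, ← Complex.ofReal_mul, Complex.ofReal_re]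
        using Complex.hasSum_re this
    calc ∑ n ∈ Finset.range N, c n * s ^ n ≤ (f s).re :=
          sum_le_hasSum _ (fun n _ => mul_nonneg (hc n) (pow_nonneg hs.1.le n)) hsum
      _ ≤ ‖f s‖ := Complex.re_le_norm _
      _ ≤ M := hM _ hsr
  have hcont : Continuous fun s : ℝ => ∑ n ∈ Finset.range N, c n * s ^ n := by fun_prop
  exact le_of_tendsto hcont.continuousWithinAt (mem_of_superset (Ioo_mem_nhdsLT hr) hlt)

end PowerSeries

section BinomialSeries

lemma choose_add_sub_one_eq_prod (s : ℝ) (n : ℕ) :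
    Ring.choose (s + n - 1) n = (∏ j ∈ Finset.range n, (s + j)) / n.factorial := by
  have hn : (n.factorial : ℝ) ≠ 0 := by exact_mod_cast n.factorial_ne_zero
  rw [← Ring.multichoose_eq, eq_div_iff hn, mul_comm, ← nsmul_eq_mul,
    Ring.factorial_nsmul_multichoose_eq_ascPochhammer, Polynomial.ascPochhammer_smeval_eq_eval]
  induction n with
  | zero => simp
  | succ n ih =>
    rw [ascPochhammer_succ_eval, ih (by positivity), Finset.prod_range_succ]

/-- At the poles of `Γ` both sides vanish, since Mathlib's `Γ` takes the value `0` there. -/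
lemma tendsto_rpow_mul_choose (s : ℝ) :
    Tendsto (fun n : ℕ => (n : ℝ) ^ (1 - s) * Ring.choose (s + n - 1) n) atTop
      (𝓝 (Real.Gamma s)⁻¹) := by
  have hinv : Tendsto (fun n => (Real.GammaSeq s n)⁻¹) atTop (𝓝 (Real.Gamma s)⁻¹) := by
    by_cases hs : ∃ m : ℕ, s = -m
    · obtain ⟨m, rfl⟩ := hs
      have hseq : (fun _ => 0) =ᶠ[atTop] fun n => (Real.GammaSeq (-m : ℝ) n)⁻¹ := by
        filter_upwards [eventually_ge_atTop m] with n hn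
        rw [Real.GammaSeq, Finset.prod_eq_zero (Finset.mem_range.2 (Nat.lt_succ_of_le hn))
          (neg_add_cancel (m : ℝ)), div_zero, inv_zero]
      rw [Real.Gamma_neg_nat_eq_zero, inv_zero]
      exact tendsto_const_nhds.congr' hseq
    · exact (Real.GammaSeq_tendsto_Gamma s).inv₀ (Real.Gamma_ne_zero fun m hm => hs ⟨m, hm⟩)
  have hratio : Tendsto (fun n : ℕ => (n : ℝ) / (n + s)) atTop (𝓝 1) :=
    tendsto_natCast_div_add_atTop s
  refine (by simpa using hratio.mul hinv : Tendsto _ atTop (𝓝 (Real.Gamma s)⁻¹)).congr' ?_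
  filter_upwards [eventually_gt_atTop 0, eventually_gt_atTop ⌈-s⌉₊] with n hn hns
  have hn0 : (0 : ℝ) < n := by exact_mod_cast hn
  have hsn : (n : ℝ) + s ≠ 0 := by linarith [Nat.lt_of_ceil_lt hns]
  rw [Real.GammaSeq, choose_add_sub_one_eq_prod, Finset.prod_range_succ, Real.rpow_sub hn0,
    Real.rpow_one, add_comm s]
  field_simp

end BinomialSeries

section Parametrization

/-- The parametrization `û` in the variable `k = 1 - H`, normalized by `u_c`. Near the critical
point `k = 0` it is `1 - param k ~ (2 / 3) k ^ 3`. -/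
noncomputable def param (k : ℂ) : ℂ := 1 - k ^ 3 * (2 + k) / 3

/-- The closed sector `|arg k| ≤ π / 6`. -/
def sector : Set ℂ := {k | 0 ≤ k.re ∧ 3 * k.im ^ 2 ≤ k.re ^ 2}

/-- The open sector `|arg k| < π / 6`. -/
def openSector : Set ℂ := {k | 0 < k.re ∧ 3 * k.im ^ 2 < k.re ^ 2}

/-- The part of the open sector that `param` maps into the open unit disc. Its closure plays the
role of the closed disc of convergence, with the critical point at `0`. -/
def paramRegion : Set ℂ := {k | k ∈ openSector ∧ ‖param k‖ < 1}

variable {k l m : ℂ}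

lemma isClosed_sector : IsClosed sector :=
  (isClosed_le continuous_const Complex.continuous_re).inter
    (isClosed_le (f := fun k : ℂ => 3 * k.im ^ 2) (g := fun k : ℂ => k.re ^ 2)
      (by fun_prop) (by fun_prop))

lemma isOpen_openSector : IsOpen openSector :=
  (isOpen_lt continuous_const Complex.continuous_re).inter
    (isOpen_lt (f := fun k : ℂ => 3 * k.im ^ 2) (g := fun k : ℂ => k.re ^ 2)
      (by fun_prop) (by fun_prop))

lemma openSector_subset_sector : openSector ⊆ sector := fun _ hk => ⟨hk.1.le, hk.2.le⟩

lemma ne_zero_of_mem_openSector (hk : k ∈ openSector) : k ≠ 0 := by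
  rintro rfl
  exact lt_irrefl _ hk.1

lemma eq_zero_of_mem_sector (hk : k ∈ sector) (h : k.re = 0) : k = 0 := by
  have him := hk.2
  refine Complex.ext h (pow_eq_zero_iff two_ne_zero |>.1 ?_)
  rw [h] at him
  linarith [sq_nonneg k.im]

lemma abs_im_mul_im_le (hk : k ∈ sector) (hl : l ∈ sector) :
    |k.im * l.im| ≤ k.re * l.re / 3 := by
  have hk0 := hk.1
  have hl0 := hl.1
  refine abs_le_of_sq_le_sq ?_ (by positivity)
  have hsq : (3 * k.im ^ 2) * (3 * l.im ^ 2) ≤ k.re ^ 2 * l.re ^ 2 :=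
    mul_le_mul hk.2 hl.2 (by positivity) (by positivity)
  linear_combination hsq / 9

lemma two_thirds_mul_re_le_re_mul (hk : k ∈ sector) (hl : l ∈ sector) :
    2 / 3 * (k.re * l.re) ≤ (k * l).re := by
  rw [Complex.mul_re]
  linarith [(abs_le.1 (abs_im_mul_im_le hk hl)).2]

lemma re_mul_nonneg (hk : k ∈ sector) (hl : l ∈ sector) : 0 ≤ (k * l).re :=
  (mul_nonneg (by norm_num) (mul_nonneg hk.1 hl.1)).trans (two_thirds_mul_re_le_re_mul hk hl)

lemma re_mul_mul_nonneg (hk : k ∈ sector) (hl : l ∈ sector) (hm : m ∈ sector) :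
    0 ≤ (k * l * m).re := by
  have hkl := mul_le_mul_of_nonneg_right (abs_le.1 (abs_im_mul_im_le hk hl)).2 hm.1
  have hkm := mul_le_mul_of_nonneg_right (abs_le.1 (abs_im_mul_im_le hk hm)).2 hl.1
  have hlm := mul_le_mul_of_nonneg_right (abs_le.1 (abs_im_mul_im_le hl hm)).2 hk.1
  have hre : (k * l * m).re = k.re * l.re * m.re - (k.im * l.im) * m.re - (k.im * m.im) * l.re
      - (l.im * m.im) * k.re := by
    simp only [Complex.mul_re, Complex.mul_im]
    ring
  rw [hre]
  linarith

lemma re_cube_pos (hk : k ∈ openSector) : 0 < (k ^ 3).re := by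
  have hre : (k ^ 3).re = k.re * (k.re ^ 2 - 3 * k.im ^ 2) := by
    rw [pow_succ, pow_two]
    simp only [Complex.mul_re, Complex.mul_im]
    ring
  rw [hre]
  exact mul_pos hk.1 (sub_pos.2 hk.2)

lemma param_zero : param 0 = 1 := by simp [param]

lemma param_one : param 1 = 0 := by norm_num [param]

lemma continuous_param : Continuous param := by unfold param; fun_prop

lemma param_injOn : Set.InjOn param sector := by
  intro k hk l hl h
  have hfactor : (k - l) * ((k * k * k + k * k * l + k * l * l + l * l * l)
      + ((2 : ℝ) : ℂ) * (k * k + k * l + l * l)) = 0 := by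
    unfold param at h
    push_cast
    linear_combination (-3 : ℂ) * h
  rcases mul_eq_zero.1 hfactor with hkl | hsum
  · exact sub_eq_zero.1 hkl
  · have hre := congrArg Complex.re hsum
    rw [Complex.add_re, Complex.re_ofReal_mul, Complex.zero_re] at hre
    simp only [Complex.add_re] at hre
    have hkk := two_thirds_mul_re_le_re_mul hk hk
    have hll := two_thirds_mul_re_le_re_mul hl hl
    have hsq : k.re * k.re + l.re * l.re ≤ 0 := by
      linarith [re_mul_mul_nonneg hk hk hk, re_mul_mul_nonneg hk hk hl, re_mul_mul_nonneg hk hl hl,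
        re_mul_mul_nonneg hl hl hl, re_mul_nonneg hk hl]
    have hk0 : k.re = 0 := by nlinarith [mul_self_nonneg k.re, mul_self_nonneg l.re]
    have hl0 : l.re = 0 := by nlinarith [mul_self_nonneg k.re, mul_self_nonneg l.re]
    rw [eq_zero_of_mem_sector hk hk0, eq_zero_of_mem_sector hl hl0]

lemma re_param (k : ℂ) : (param k).re = 1 - (k.re * (k.re ^ 2 - 3 * k.im ^ 2) * (2 + k.re)
    - k.im ^ 2 * (3 * k.re ^ 2 - k.im ^ 2)) / 3 := by
  have hk : param k = 1 - ((1 / 3 : ℝ) : ℂ) * (k * k * k * (2 + k)) := by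
    unfold param
    push_cast
    ring
  rw [hk, Complex.sub_re, Complex.re_ofReal_mul]
  simp only [Complex.mul_re, Complex.mul_im, Complex.add_re, Complex.add_im, Complex.one_re,
    Complex.re_ofNat, Complex.im_ofNat]
  ring

/-- On the two rays bounding the sector, `Re (param k) ≥ 1`. -/
lemma mem_paramRegion_of_mem_sector (hk : k ∈ sector) (h : ‖param k‖ < 1) : k ∈ paramRegion := by
  have hre : (param k).re < 1 := (Complex.re_le_norm _).trans_lt h
  rw [re_param] at hre
  refine ⟨⟨hk.1.lt_of_ne fun h0 => ?_, hk.2.lt_of_ne fun h0 => ?_⟩, h⟩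
  · have him : k.im = 0 := by rw [eq_zero_of_mem_sector hk h0.symm, Complex.zero_im]
    rw [← h0, him] at hre
    norm_num at hre
  · rw [h0] at hre
    nlinarith [sq_nonneg (k.im ^ 2), mul_nonneg (sq_nonneg k.im) (sq_nonneg k.im)]

lemma paramRegion_subset_openSector : paramRegion ⊆ openSector := fun _ hk => hk.1

lemma isOpen_paramRegion : IsOpen paramRegion :=
  isOpen_openSector.inter (isOpen_lt continuous_param.norm continuous_const)

lemma closure_paramRegion_subset_sector : closure paramRegion ⊆ sector :=
  closure_minimal (paramRegion_subset_openSector.trans openSector_subset_sector) isClosed_sector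

lemma norm_param_le_one (hk : k ∈ closure paramRegion) : ‖param k‖ ≤ 1 :=
  closure_minimal (fun _ hk => hk.2.le : paramRegion ⊆ {k | ‖param k‖ ≤ 1})
    (isClosed_le continuous_param.norm continuous_const) hk

lemma norm_sq_le_three (hk : k ∈ closure paramRegion) : ‖k‖ ^ 2 ≤ 3 := by
  have hnorm : ‖k‖ ^ 3 * ‖2 + k‖ ≤ 6 := by
    calc ‖k‖ ^ 3 * ‖2 + k‖ = ‖(3 : ℂ)‖ * ‖1 - param k‖ := by
          rw [← norm_pow, ← norm_mul, ← norm_mul]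
          congr 1
          unfold param
          ring
      _ ≤ 3 * (1 + 1) := by
          rw [Complex.norm_ofNat]
          gcongr
          exact (norm_sub_le _ _).trans (add_le_add norm_one.le (norm_param_le_one hk))
      _ = 6 := by norm_num
  have htwo : 2 ≤ ‖2 + k‖ := by
    refine le_trans ?_ (Complex.re_le_norm _)
    simpa using (closure_paramRegion_subset_sector hk).1
  by_contra! hlt
  have hone : 1 < ‖k‖ := by nlinarith [norm_nonneg k]
  have hcube : 3 < ‖k‖ ^ 3 := by nlinarith
  nlinarith

lemma isCompact_closure_paramRegion : IsCompact (closure paramRegion) :=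
  isCompact_of_isClosed_isBounded isClosed_closure <|
    (isBounded_closedBall (x := (0 : ℂ)) (r := 2)).subset fun k hk => by
      rw [mem_closedBall_zero_iff]
      nlinarith [norm_sq_le_three hk, norm_nonneg k]

lemma hasStrictDerivAt_param (k : ℂ) :
    HasStrictDerivAt param (-(2 / 3) * k ^ 2 * (3 + 2 * k)) k := by
  have h := (((hasStrictDerivAt_pow 3 k).mul
    ((hasStrictDerivAt_id k).const_add 2)).div_const 3).const_sub 1
  convert! h using 1
  norm_num
  ring

lemma three_add_two_mul_ne_zero (hk : k ∈ sector) : 3 + 2 * k ≠ 0 := fun h => by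
  have hre := congrArg Complex.re h
  simp only [Complex.add_re, Complex.mul_re, Complex.re_ofNat, Complex.im_ofNat, zero_mul, sub_zero,
    Complex.zero_re] at hre
  linarith [hk.1]

lemma deriv_param_ne_zero (hk : k ∈ openSector) : -(2 / 3) * k ^ 2 * (3 + 2 * k) ≠ 0 :=
  mul_ne_zero (mul_ne_zero (by norm_num) (pow_ne_zero 2 (ne_zero_of_mem_openSector hk)))
    (three_add_two_mul_ne_zero (openSector_subset_sector hk))

lemma isOpen_image_param {V : Set ℂ} (hV : IsOpen V) (hs : V ⊆ openSector) :
    IsOpen (param '' V) := by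
  rw [isOpen_iff_mem_nhds]
  rintro _ ⟨k, hk, rfl⟩
  rw [← (hasStrictDerivAt_param k).map_nhds_eq (deriv_param_ne_zero (hs hk))]
  exact image_mem_map (hV.mem_nhds hk)

lemma one_mem_paramRegion : (1 : ℂ) ∈ paramRegion :=
  ⟨by simp [openSector], by simp [param_one]⟩

/-- The image is open, and relatively closed in the disc by compactness of the closed region. -/
lemma ball_subset_image_paramRegion : ball (0 : ℂ) 1 ⊆ param '' paramRegion := by
  refine (convex_ball (0 : ℂ) 1).isPreconnected.subset_of_closure_inter_subset
    (isOpen_image_param isOpen_paramRegion paramRegion_subset_openSector)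
    ⟨0, mem_ball_self one_pos, 1, one_mem_paramRegion, param_one⟩ ?_
  rintro x ⟨hx, hx1⟩
  obtain ⟨k, hk, rfl⟩ : x ∈ param '' closure paramRegion :=
    closure_minimal (Set.image_mono subset_closure)
      (isCompact_closure_paramRegion.image continuous_param).isClosed hx
  exact ⟨k, mem_paramRegion_of_mem_sector (closure_paramRegion_subset_sector hk)
    (mem_ball_zero_iff.1 hx1), rfl⟩

lemma closedBall_subset_image_closure_paramRegion :
    closedBall (0 : ℂ) 1 ⊆ param '' closure paramRegion := by
  rw [← closure_ball (0 : ℂ) one_ne_zero]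
  exact closure_minimal (ball_subset_image_paramRegion.trans (Set.image_mono subset_closure))
    (isCompact_closure_paramRegion.image continuous_param).isClosed

lemma zero_mem_closure_paramRegion : (0 : ℂ) ∈ closure paramRegion := by
  obtain ⟨k, hk, hk1⟩ := closedBall_subset_image_closure_paramRegion
    (show (1 : ℂ) ∈ closedBall 0 1 by simp)
  rw [← param_zero] at hk1
  have hzero : (0 : ℂ) ∈ sector := by simp [sector]
  rwa [← param_injOn (closure_paramRegion_subset_sector hk) hzero hk1]

/-- The inverse of `param` on the open unit disc, with values in `paramRegion`. -/
noncomputable def paramInv : ℂ → ℂ := Function.invFunOn param paramRegion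

variable {x : ℂ}

lemma paramInv_mem (hx : x ∈ ball (0 : ℂ) 1) : paramInv x ∈ paramRegion :=
  Function.invFunOn_mem (ball_subset_image_paramRegion hx)

lemma param_paramInv (hx : x ∈ ball (0 : ℂ) 1) : param (paramInv x) = x :=
  Function.invFunOn_eq (ball_subset_image_paramRegion hx)

lemma param_mem_ball (hk : k ∈ paramRegion) : param k ∈ ball (0 : ℂ) 1 :=
  mem_ball_zero_iff.2 hk.2

lemma paramInv_param (hk : k ∈ paramRegion) : paramInv (param k) = k :=
  (param_injOn.mono (paramRegion_subset_openSector.trans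
    openSector_subset_sector)).leftInvOn_invFunOn hk

lemma paramInv_zero : paramInv 0 = 1 := by rw [← param_one, paramInv_param one_mem_paramRegion]

lemma continuousAt_paramInv (hx : x ∈ ball (0 : ℂ) 1) : ContinuousAt paramInv x := by
  intro V hV
  obtain ⟨W, hWV, hW, hxW⟩ := _root_.mem_nhds_iff.1 hV
  have hopen := isOpen_image_param (hW.inter isOpen_paramRegion)
    (Set.inter_subset_right.trans paramRegion_subset_openSector)
  rw [Filter.mem_map]
  filter_upwards [hopen.mem_nhds ⟨paramInv x, ⟨hxW, paramInv_mem hx⟩, param_paramInv hx⟩]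
  rintro _ ⟨k, hk, rfl⟩
  rw [Set.mem_preimage, paramInv_param hk.2]
  exact hWV hk.1

lemma hasDerivAt_paramInv (hx : x ∈ ball (0 : ℂ) 1) :
    HasDerivAt paramInv (-(2 / 3) * paramInv x ^ 2 * (3 + 2 * paramInv x))⁻¹ x := by
  refine HasDerivAt.of_local_left_inverse (continuousAt_paramInv hx)
    (hasStrictDerivAt_param _).hasDerivAt
    (deriv_param_ne_zero (paramRegion_subset_openSector (paramInv_mem hx))) ?_
  filter_upwards [isOpen_ball.mem_nhds hx] with y hy using param_paramInv hy

lemma differentiableOn_comp_paramInv {f : ℂ → ℂ} (hf : DifferentiableOn ℂ f paramRegion) :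
    DifferentiableOn ℂ (f ∘ paramInv) (ball 0 1) :=
  hf.comp (fun _ hx => (hasDerivAt_paramInv hx).differentiableAt.differentiableWithinAt)
    fun _ hx => paramInv_mem hx

end Parametrization

section Transfer

/-- The analytic branch of `((2 + k) / 3) ^ (1 / 3)`, so that `k * cubeRootFactor k` is a cube root
of `1 - param k`. -/
noncomputable def cubeRootFactor (k : ℂ) : ℂ := ((2 + k) / 3) ^ (1 / 3 : ℂ)

variable {k : ℂ} {f : ℂ → ℂ}

lemma re_two_add_div_three_pos (hk : k ∈ sector) : 0 < ((2 + k) / 3).re := by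
  rw [Complex.div_ofNat_re, Complex.add_re, Complex.re_ofNat]
  linarith [hk.1]

lemma cubeRootFactor_ne_zero (hk : k ∈ sector) : cubeRootFactor k ≠ 0 := by
  have hpos := re_two_add_div_three_pos hk
  refine (Complex.cpow_ne_zero_iff_of_exponent_ne_zero (by norm_num)).2 fun h => ?_
  rw [h, Complex.zero_re] at hpos
  exact hpos.false

lemma analyticOnNhd_cubeRootFactor : AnalyticOnNhd ℂ cubeRootFactor (closure paramRegion) := by
  intro k hk
  have hslit : (2 + k) / 3 ∈ Complex.slitPlane :=
    Or.inl (re_two_add_div_three_pos (closure_paramRegion_subset_sector hk))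
  exact ((analyticAt_const.add analyticAt_id).div_const).cpow analyticAt_const hslit

lemma abs_arg_lt_pi_div_three (hk : k ∈ openSector) : |k.arg| < Real.pi / 3 := by
  have hpos : 0 < ‖k‖ := norm_pos_iff.2 (ne_zero_of_mem_openSector hk)
  have hsin : |k.im / ‖k‖| < Real.sin (Real.pi / 3) := by
    rw [Real.sin_pi_div_three, abs_div, abs_norm, div_lt_iff₀ hpos]
    refine lt_of_pow_lt_pow_left₀ 2 (by positivity) ?_
    rw [mul_pow, div_pow, Real.sq_sqrt (by norm_num), sq_abs, Complex.sq_norm,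
      Complex.normSq_apply]
    nlinarith [hk.2, sq_nonneg k.im]
  have hpi := Real.pi_pos
  obtain ⟨hlo, hhi⟩ := abs_lt.1 hsin
  rw [Complex.arg_of_re_nonneg hk.1.le, abs_lt]
  rw [← Real.sin_neg] at hlo
  constructor
  · exact (Real.lt_arcsin_iff_sin_lt' ⟨by linarith, by linarith⟩).2 hlo
  · exact (Real.arcsin_lt_iff_lt_sin' ⟨by linarith, by linarith⟩).2 hhi

lemma mul_cpow_of_re_pos {a b : ℂ} (ha : 0 < a.re) (hb : 0 < b.re) (c : ℂ) :
    (a * b) ^ c = a ^ c * b ^ c := by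
  have hne : ∀ {z : ℂ}, 0 < z.re → z ≠ 0 := by
    rintro _ hz rfl
    exact hz.false
  have harg_a := abs_lt.1 (Complex.abs_arg_lt_pi_div_two_iff.2 (Or.inl ha))
  have harg_b := abs_lt.1 (Complex.abs_arg_lt_pi_div_two_iff.2 (Or.inl hb))
  have hlog : Complex.log (a * b) = Complex.log a + Complex.log b :=
    (Complex.log_mul_eq_add_log_iff (hne ha) (hne hb)).2 (by constructor <;> linarith)
  rw [Complex.cpow_def_of_ne_zero (mul_ne_zero (hne ha) (hne hb)), hlog, add_mul, Complex.exp_add,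
    ← Complex.cpow_def_of_ne_zero (hne ha), ← Complex.cpow_def_of_ne_zero (hne hb)]

lemma one_sub_param_cpow_one_third (hk : k ∈ openSector) :
    (1 - param k) ^ (1 / 3 : ℂ) = k * cubeRootFactor k := by
  have harg := abs_lt.1 (abs_arg_lt_pi_div_three hk)
  calc (1 - param k) ^ (1 / 3 : ℂ) = (k ^ 3 * ((2 + k) / 3)) ^ (1 / 3 : ℂ) := by
        rw [param]
        ring_nf
    _ = (k ^ 3) ^ (1 / 3 : ℂ) * cubeRootFactor k :=
        mul_cpow_of_re_pos (re_cube_pos hk)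
          (re_two_add_div_three_pos (openSector_subset_sector hk)) _
    _ = k * cubeRootFactor k := by
        rw [one_div, Complex.pow_cpow_ofNat_inv harg.1 harg.2.le]

lemma taylorCoeff_mul_cubeRootFactor_pow (N n : ℕ) :
    taylorCoeff (fun y => (paramInv y * cubeRootFactor (paramInv y)) ^ N) n =
      (Ring.choose (-(N / 3 : ℝ) + n - 1) n : ℝ) := by
  have hseries :=
    (Complex.one_div_one_sub_cpow_hasFPowerSeriesOnBall_zero (-(N / 3 : ℝ))).hasFPowerSeriesAt
  have heq : (fun y : ℂ => 1 / (1 - y) ^ ((-(N / 3 : ℝ) : ℝ) : ℂ)) =ᶠ[𝓝 0]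
      fun y => (paramInv y * cubeRootFactor (paramInv y)) ^ N := by
    filter_upwards [ball_mem_nhds (0 : ℂ) one_pos] with y hy
    rw [← one_sub_param_cpow_one_third (paramInv_mem hy).1, param_paramInv hy,
      ← Complex.cpow_mul_nat]
    push_cast
    rw [Complex.cpow_neg, one_div, inv_inv]
    ring_nf
  push_cast at heq hseries
  rw [taylorCoeff_eq_of_hasFPowerSeriesAt (hseries.congr heq), Complex.ofReal_choose]
  push_cast
  rfl

lemma exists_norm_le_of_analyticOnNhd (hf : AnalyticOnNhd ℂ f (closure paramRegion)) :
    ∃ M, ∀ k ∈ closure paramRegion, ‖f k‖ ≤ M :=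
  isCompact_closure_paramRegion.exists_bound_of_continuousOn hf.continuousOn

lemma differentiableOn_comp_paramInv_of_analyticOnNhd
    (hf : AnalyticOnNhd ℂ f (closure paramRegion)) :
    DifferentiableOn ℂ (fun y => f (paramInv y)) (ball 0 1) :=
  differentiableOn_comp_paramInv (hf.differentiableOn.mono subset_closure)

lemma isBigO_one_taylorCoeff_comp_paramInv (hf : AnalyticOnNhd ℂ f (closure paramRegion)) :
    taylorCoeff (fun y => f (paramInv y)) =O[atTop] fun _ => (1 : ℝ) := by
  obtain ⟨M, hM⟩ := exists_norm_le_of_analyticOnNhd hf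
  refine IsBigO.of_bound M (Eventually.of_forall fun n => ?_)
  have hn := norm_taylorCoeff_mul_pow_le one_pos
    (differentiableOn_comp_paramInv_of_analyticOnNhd hf)
    (fun y hy => hM _ (subset_closure (paramInv_mem hy))) n
  simpa using hn

/-- Applying `y d/dy` to a function of `paramInv y` costs three powers of `paramInv y`. -/
lemma exists_natCast_mul_taylorCoeff (hf : AnalyticOnNhd ℂ f (closure paramRegion)) (N : ℕ) :
    ∃ g : ℂ → ℂ, AnalyticOnNhd ℂ g (closure paramRegion) ∧ ∀ n : ℕ,
      n * taylorCoeff (fun y => paramInv y ^ (N + 3) * f (paramInv y)) n =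
        taylorCoeff (fun y => paramInv y ^ N * g (paramInv y)) n := by
  set g : ℂ → ℂ := fun k =>
    ((N + 3) * f k + k * deriv f k) * (-(2 / 3) * (3 + 2 * k))⁻¹ with hg
  have hden : ∀ k ∈ closure paramRegion, -(2 / 3) * (3 + 2 * k) ≠ 0 := fun k hk =>
    mul_ne_zero (by norm_num) (three_add_two_mul_ne_zero (closure_paramRegion_subset_sector hk))
  refine ⟨fun k => param k * g k, fun k hk => ?_, fun n => ?_⟩
  · have hfk := hf k hk
    have hden_inv : AnalyticAt ℂ (fun k : ℂ => (-(2 / 3) * (3 + 2 * k))⁻¹) k :=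
      AnalyticAt.inv (by fun_prop) (hden k hk)
    have := hfk.deriv
    unfold param
    fun_prop
  · have hderiv : ∀ y ∈ ball (0 : ℂ) 1, HasDerivAt
        (fun y => paramInv y ^ (N + 3) * f (paramInv y)) (paramInv y ^ N * g (paramInv y)) y := by
      intro y hy
      have hmem := paramInv_mem hy
      have hk0 := ne_zero_of_mem_openSector hmem.1
      have := three_add_two_mul_ne_zero (openSector_subset_sector hmem.1)
      have hfy := (hf _ (subset_closure hmem)).differentiableAt.hasDerivAt
      have hcomp := HasDerivAt.comp y ((hasDerivAt_pow (N + 3) _).mul hfy) (hasDerivAt_paramInv hy)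
      convert! hcomp using 1
      simp only [hg, Nat.add_succ_sub_one]
      push_cast
      field_simp
      ring
    rw [← taylorCoeff_mul_of_hasDerivAt one_pos hderiv]
    refine congrFun (taylorCoeff_congr ?_) n
    filter_upwards [ball_mem_nhds (0 : ℂ) one_pos] with y hy
    rw [param_paramInv hy]
    ring

lemma isBigO_taylorCoeff_pow_three_mul (r : ℕ) :
    ∀ {f : ℂ → ℂ}, AnalyticOnNhd ℂ f (closure paramRegion) →
      taylorCoeff (fun y => paramInv y ^ (3 * r) * f (paramInv y)) =O[atTop]
        fun n => (n : ℝ) ^ (-r : ℝ) := by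
  induction r with
  | zero => intro f hf; simpa using isBigO_one_taylorCoeff_comp_paramInv hf
  | succ r ih =>
    intro f hf
    obtain ⟨g, hg, hcoeff⟩ := exists_natCast_mul_taylorCoeff hf (3 * r)
    have hinv : (fun n : ℕ => (n : ℂ)⁻¹) =O[atTop] fun n : ℕ => (n : ℝ)⁻¹ :=
      IsBigO.of_bound' (Eventually.of_forall fun n => by simp)
    refine (hinv.mul (ih hg)).congr' ?_ ?_ <;> filter_upwards [eventually_gt_atTop 0] with n hn
    · have hn0 : (n : ℂ) ≠ 0 := by exact_mod_cast hn.ne'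
      rw [← hcoeff, inv_mul_cancel_left₀ hn0]
      rfl
    · have hn0 : (0 : ℝ) < n := by exact_mod_cast hn
      rw [← Real.rpow_neg_one, ← Real.rpow_add hn0]
      push_cast
      ring_nf

lemma analyticOnNhd_dslope {s : Set ℂ} (hf : AnalyticOnNhd ℂ f s) (c : ℂ) :
    AnalyticOnNhd ℂ (dslope f c) s := by
  intro k hk
  rcases eq_or_ne k c with rfl | hkc
  · obtain ⟨p, hp⟩ := hf k hk
    exact hp.has_fpower_series_dslope_fslope.analyticAt
  · refine AnalyticAt.congr ?_ (dslope_eventuallyEq_slope_of_ne f hkc).symm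
    exact ((analyticAt_id.sub analyticAt_const).inv (sub_ne_zero.2 hkc)).smul
      ((hf k hk).sub analyticAt_const)

lemma exists_taylorCoeff_pow_mul_eq (hf : AnalyticOnNhd ℂ f (closure paramRegion)) (N : ℕ) :
    ∃ g : ℂ → ℂ, AnalyticOnNhd ℂ g (closure paramRegion) ∧ ∀ n : ℕ,
      taylorCoeff (fun y => paramInv y ^ N * f (paramInv y)) n =
        f 0 / cubeRootFactor 0 ^ N * (Ring.choose (-(N / 3 : ℝ) + n - 1) n : ℝ) +
          taylorCoeff (fun y => paramInv y ^ (N + 1) * g (paramInv y)) n := by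
  set b : ℂ := f 0 / cubeRootFactor 0 ^ N with hb
  set F : ℂ → ℂ := fun k => f k - b * cubeRootFactor k ^ N with hF
  have hθ0 : cubeRootFactor 0 ^ N ≠ 0 := pow_ne_zero N (cubeRootFactor_ne_zero
    (closure_paramRegion_subset_sector zero_mem_closure_paramRegion))
  have hFan : AnalyticOnNhd ℂ F (closure paramRegion) :=
    hf.sub (analyticOnNhd_const.mul (analyticOnNhd_cubeRootFactor.pow N))
  have hF0 : F 0 = 0 := by simp only [hF, hb, div_mul_cancel₀ _ hθ0, sub_self]
  have hFfactor : ∀ k, F k = k * dslope F 0 k := fun k => by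
    simpa [hF0] using (sub_smul_dslope F 0 k).symm
  have hdslope : AnalyticOnNhd ℂ (dslope F 0) (closure paramRegion) :=
    analyticOnNhd_dslope hFan 0
  have hpull : ∀ {g : ℂ → ℂ}, AnalyticOnNhd ℂ g (closure paramRegion) →
      AnalyticAt ℂ (fun y => g (paramInv y)) 0 := fun hg =>
    (differentiableOn_comp_paramInv_of_analyticOnNhd hg).analyticAt (ball_mem_nhds 0 one_pos)
  refine ⟨dslope F 0, hdslope, fun n => ?_⟩
  rw [← taylorCoeff_mul_cubeRootFactor_pow, ← taylorCoeff_const_mul, ← taylorCoeff_add]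
  · congr 1
    funext y
    have := hFfactor (paramInv y)
    simp only [hF] at this
    linear_combination paramInv y ^ N * this
  · exact hpull
      (analyticOnNhd_const.mul ((analyticOnNhd_id.mul analyticOnNhd_cubeRootFactor).pow N))
  · exact hpull ((analyticOnNhd_id.pow (N + 1)).mul hdslope)

lemma isBigO_choose_add_sub_one (s : ℝ) :
    (fun n : ℕ => ((Ring.choose (s + n - 1) n : ℝ) : ℂ)) =O[atTop] fun n => (n : ℝ) ^ (s - 1) := by
  refine IsBigO.of_norm_left ?_
  simp only [Complex.norm_real, isBigO_norm_left]
  refine ((tendsto_rpow_mul_choose s).isBigO_one ℝ |>.mul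
    (isBigO_refl (fun n : ℕ => (n : ℝ) ^ (s - 1)) atTop)).congr' ?_ ?_ <;>
  filter_upwards [eventually_gt_atTop 0] with n hn
  · have hn0 : (0 : ℝ) < n := by exact_mod_cast hn
    rw [mul_right_comm, ← Real.rpow_add hn0, sub_add_sub_cancel', sub_self, Real.rpow_zero, one_mul]
  · exact one_mul _

lemma isBigO_taylorCoeff_pow_mul (N : ℕ) (hf : AnalyticOnNhd ℂ f (closure paramRegion)) :
    taylorCoeff (fun y => paramInv y ^ N * f (paramInv y)) =O[atTop]
      fun n => (n : ℝ) ^ (-(N / 3 : ℝ) - 1) := by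
  have hrpow : ∀ {a b : ℝ}, a ≤ b →
      (fun n : ℕ => (n : ℝ) ^ a) =O[atTop] fun n : ℕ => (n : ℝ) ^ b := fun hab =>
    IsBigO.of_norm_eventuallyLE <| by
      filter_upwards [eventually_ge_atTop 1] with n hn
      rw [Real.norm_of_nonneg (by positivity)]
      exact Real.rpow_le_rpow_of_exponent_le (by exact_mod_cast hn) hab
  let IsSmall (M : ℕ) : Prop := ∀ g : ℂ → ℂ, AnalyticOnNhd ℂ g (closure paramRegion) →
    taylorCoeff (fun y => paramInv y ^ M * g (paramInv y)) =O[atTop]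
      fun n => (n : ℝ) ^ (-(N / 3 : ℝ) - 1)
  have hbase : IsSmall (3 * (N + 1)) := fun g hg => by
    refine (isBigO_taylorCoeff_pow_three_mul (N + 1) hg).trans (hrpow ?_)
    push_cast
    linarith [N.cast_nonneg (α := ℝ)]
  have hstep : ∀ M, N ≤ M → IsSmall (M + 1) → IsSmall M := fun M hNM ih g hg => by
    obtain ⟨q, hq, hcoeff⟩ := exists_taylorCoeff_pow_mul_eq hg M
    have hNM' : (N : ℝ) ≤ M := by exact_mod_cast hNM
    rw [funext hcoeff]
    exact (((isBigO_choose_add_sub_one _).trans (hrpow (by linarith))).const_mul_left _).add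
      (ih q hq)
  exact Nat.decreasingInduction' (P := IsSmall) (fun M _ => hstep M) (by lia) hbase f hf

/-- Transfer theorem: the leading singular term, a multiple of `(1 - y) ^ (N / 3)`, determines the
coefficient asymptotics. -/
theorem tendsto_rpow_mul_taylorCoeff_pow_mul (N : ℕ)
    (hf : AnalyticOnNhd ℂ f (closure paramRegion)) :
    Tendsto (fun n : ℕ => (((n : ℝ) ^ (N / 3 + 1 : ℝ) : ℝ) : ℂ) *
        taylorCoeff (fun y => paramInv y ^ N * f (paramInv y)) n) atTop
      (𝓝 (f 0 / cubeRootFactor 0 ^ N * ((Real.Gamma (-(N / 3)))⁻¹ : ℝ))) := by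
  obtain ⟨g, hg, hcoeff⟩ := exists_taylorCoeff_pow_mul_eq hf N
  have hmain : Tendsto (fun n : ℕ => f 0 / cubeRootFactor 0 ^ N *
      (((n : ℝ) ^ (1 - -(N / 3 : ℝ)) * Ring.choose (-(N / 3 : ℝ) + n - 1) n : ℝ) : ℂ)) atTop
      (𝓝 (f 0 / cubeRootFactor 0 ^ N * ((Real.Gamma (-(N / 3)))⁻¹ : ℝ))) :=
    ((Complex.continuous_ofReal.tendsto _).comp (tendsto_rpow_mul_choose _)).const_mul _
  have hrest : Tendsto (fun n : ℕ => (((n : ℝ) ^ (N / 3 + 1 : ℝ) : ℝ) : ℂ) *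
      taylorCoeff (fun y => paramInv y ^ (N + 1) * g (paramInv y)) n) atTop (𝓝 0) := by
    have hdecay : Tendsto (fun n : ℕ => (n : ℝ) ^ (-(1 / 3 : ℝ))) atTop (𝓝 0) :=
      (tendsto_rpow_neg_atTop (by norm_num)).comp tendsto_natCast_atTop_atTop
    refine IsBigO.trans_tendsto ?_ hdecay
    refine ((IsBigO.of_bound' (Eventually.of_forall fun n => by simp)).mul
      (isBigO_taylorCoeff_pow_mul (N + 1) hg)).congr' EventuallyEq.rfl
        (g₁ := fun n : ℕ => (n : ℝ) ^ (N / 3 + 1 : ℝ) * _) ?_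
    filter_upwards [eventually_gt_atTop 0] with n hn
    have hn0 : (0 : ℝ) < n := by exact_mod_cast hn
    rw [← Real.rpow_add hn0]
    push_cast
    ring_nf
  refine (by simpa using hmain.add hrest : Tendsto _ atTop (𝓝 _)).congr fun n => ?_
  rw [hcoeff, add_comm (N / 3 : ℝ)]
  push_cast
  ring

end Transfer

section FunctionalEquation

variable {h k : ℂ}

/-- The factor of the kernel of the functional equation that vanishes in the disc of convergence
without producing a singularity. -/
def spuriousFactor (h k : ℂ) : ℂ :=
  (1 - h) ^ 2 + ((1 - k) ^ 2 - 3 * (1 - k)) * (1 - h) + (1 - k)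

/-- The factor of the kernel of the functional equation that vanishes, on the closure of
`paramRegion`, only at the critical point. -/
def zhatDen (h k : ℂ) : ℂ :=
  (h + k - h * k) + (h + k - h * k) ^ 2 + (h + k) ^ 3

/-- The numerator that accompanies `zhatDen` in `Zhat`. -/
def zhatNum (h k : ℂ) : ℂ :=
  (h + k - h * k) + 2 * (h + k - h * k) ^ 2 + 2 * (h + k) ^ 3 + (h + k + h * k) ^ 3

/-- The rational parametrization of `Z` at `u = û (1 - h)`, `v = û (1 - k)`. -/
noncomputable def Zhat (h k : ℂ) : ℂ :=
  Z0hat (1 - h) + Z0hat (1 - k) - 1 + (1 - h) * (1 - k) * zhatNum h k / (10 * zhatDen h k)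

lemma tc_pos : 0 < tc := by
  unfold tc
  positivity

lemma uc_pos : 0 < uc := by
  have := tc_pos
  unfold uc
  positivity

lemma tc_eq : 6 * (7 + √7) * tc = 5 * uc := by
  unfold uc
  ring

lemma uc_sq : 40 * (7 + √7) * uc ^ 2 = 9 := by
  have hpos : (0 : ℝ) < 7 + √7 := by positivity
  have hrpow : ((7 + √7) ^ ((3 : ℝ) / 2)) ^ 2 = (7 + √7) ^ 3 := by
    rw [← Real.rpow_natCast, ← Real.rpow_mul hpos.le, ← Real.rpow_natCast]
    norm_num
  have htc : tc ^ 2 = 10 / (64 * (7 + √7) ^ 3) := by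
    unfold tc
    rw [div_pow, mul_pow, hrpow, Real.sq_sqrt (by norm_num)]
    norm_num
  unfold uc
  rw [mul_pow, mul_pow, htc]
  field_simp
  norm_num

lemma sqrt_seven_sq : (√7 : ℂ) ^ 2 = 7 := by
  exact_mod_cast Real.sq_sqrt (show (0 : ℝ) ≤ 7 by norm_num)

lemma ofReal_nuc : (nuc : ℂ) = 1 + 2 * √7 := by
  unfold nuc
  push_cast
  ring

lemma nuc_sq_sub_one_mul_tc : ((nuc : ℂ) ^ 2 - 1) * tc = 10 / 3 * uc := by
  have htc : 6 * (7 + (√7 : ℂ)) * tc = 5 * uc := by exact_mod_cast tc_eq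
  rw [ofReal_nuc]
  linear_combination (2 / 3 : ℂ) * htc + 4 * (tc : ℂ) * sqrt_seven_sq

lemma nuc_sq_sub_one_mul_uc_sq : ((nuc : ℂ) ^ 2 - 1) * (uc : ℂ) ^ 2 = 9 / 10 := by
  have huc : 40 * (7 + (√7 : ℂ)) * (uc : ℂ) ^ 2 = 9 := by exact_mod_cast uc_sq
  rw [ofReal_nuc]
  linear_combination (1 / 10 : ℂ) * huc + 4 * (uc : ℂ) ^ 2 * sqrt_seven_sq

lemma uhat_one_sub (k : ℂ) : uhat (1 - k) = uc * param k := by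
  unfold uhat param
  ring

lemma Z0hat_one_sub (k : ℂ) :
    Z0hat (1 - k) = (3 * √7 * param k + (6 - k ^ 3 + k ^ 4 + 3 * k ^ 5 + k ^ 6)) / 10 := by
  unfold Z0hat param
  ring

lemma param_mul_Z1hat_one_sub (hk : 3 + 3 * k + 3 * k ^ 2 + k ^ 3 ≠ 0) :
    uc * param k * Z1hat (1 - k) =
      3 / 10 * (√7 * param k - (2 - k ^ 3 - k ^ 4 * (2 + k) / 3)) := by
  have huc : (uc : ℂ) ≠ 0 := by exact_mod_cast uc_pos.ne'
  have hparam : param k = (1 - k) * (3 + 3 * k + 3 * k ^ 2 + k ^ 3) / 3 := by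
    unfold param
    ring
  have hden : 10 - 12 * (1 - k) + 6 * (1 - k) ^ 2 - (1 - k) ^ 3 =
      3 + 3 * k + 3 * k ^ 2 + k ^ 3 := by ring
  unfold Z1hat
  rw [hparam, hden]
  generalize hP : 3 + 3 * k + 3 * k ^ 2 + k ^ 3 = P at hk ⊢
  field_simp
  rw [← hP]
  ring

lemma cubic_ne_zero_of_mem_sector (hk : k ∈ sector) : 3 + 3 * k + 3 * k ^ 2 + k ^ 3 ≠ 0 := by
  intro h0
  have hre : 3 + 3 * k.re + 3 * (k * k).re + (k * k * k).re = 0 := by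
    have := congrArg Complex.re h0
    rwa [pow_succ k 2, pow_two, ← Complex.ofReal_ofNat, Complex.add_re, Complex.add_re,
      Complex.add_re, Complex.re_ofReal_mul, Complex.re_ofReal_mul] at this
  linarith [re_mul_nonneg hk hk, re_mul_mul_nonneg hk hk hk, hk.1]

lemma kernel_eq (h k : ℂ) :
    param h * param k - param h ^ 2 - param k * (6 - h ^ 3 + h ^ 4 + 3 * h ^ 5 + h ^ 6) / 3
        + param h * (2 - k ^ 3 - k ^ 4 * (2 + k) / 3) =
      -(3 + 3 * h + 3 * h ^ 2 + h ^ 3) * spuriousFactor h k * zhatDen h k / 9 := by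
  unfold param spuriousFactor zhatDen
  ring

/-- In terms of the normalized variables, the right-hand side of the functional equation is the
kernel times `Ẑ₀ (1 - h) - 1`, up to a term that shares its factors with the kernel. -/
lemma kernel_rhs_eq (h k : ℂ) :
    param h ^ 2 * (Z0hat (1 - k) - Z0hat (1 - h)) + 9 / 10 * param h ^ 3 * param k
        - param h * Z0hat (1 - h) * (√7 * param k - (2 - k ^ 3 - k ^ 4 * (2 + k) / 3)) =
      -(3 + 3 * h + 3 * h ^ 2 + h ^ 3) * spuriousFactor h k *
        (zhatDen h k * (Z0hat (1 - h) - 1) + (1 - h) * (1 - k) * zhatNum h k / 10) / 9 := by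
  simp only [Z0hat_one_sub]
  unfold param spuriousFactor zhatDen zhatNum
  linear_combination (-3 / 10 * (1 - h ^ 3 * (2 + h) / 3) ^ 2 * (1 - k ^ 3 * (2 + k) / 3)) *
    sqrt_seven_sq

lemma eq_Zhat_of_functional_equation {Z : ℂ} (hh : h ∈ sector) (hk : k ∈ sector)
    (hs : spuriousFactor h k ≠ 0) (hD : zhatDen h k ≠ 0)
    (hZ : ((nuc : ℂ) * uhat (1 - k) * uhat (1 - h) - uhat (1 - h) ^ 2
          - ((nuc : ℂ) ^ 2 - 1) * (tc : ℂ) * uhat (1 - k)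
            * (Z0hat (1 - h) + uhat (1 - h) * Z1hat (1 - k)))
          * (Z - Z0hat (1 - k))
        = uhat (1 - h) ^ 2 * (Z0hat (1 - k) - Z0hat (1 - h))
          + ((nuc : ℂ) ^ 2 - 1) * uhat (1 - h) * uhat (1 - k)
            * (uhat (1 - h) ^ 2 - (tc : ℂ) * Z0hat (1 - h) * Z1hat (1 - k))) :
    Z = Zhat h k := by
  have hZ1 := param_mul_Z1hat_one_sub (cubic_ne_zero_of_mem_sector hk)
  have huc : (uc : ℂ) ^ 2 ≠ 0 := pow_ne_zero 2 (by exact_mod_cast uc_pos.ne')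
  simp only [uhat_one_sub] at hZ
  have hnormalized : (-(3 + 3 * h + 3 * h ^ 2 + h ^ 3) * spuriousFactor h k * zhatDen h k / 9)
      * (Z - Z0hat (1 - k)) =
      param h ^ 2 * (Z0hat (1 - k) - Z0hat (1 - h)) + 9 / 10 * param h ^ 3 * param k
        - param h * Z0hat (1 - h) * (√7 * param k - (2 - k ^ 3 - k ^ 4 * (2 + k) / 3)) := by
    rw [← kernel_eq]
    refine mul_left_cancel₀ huc ?_
    linear_combination hZ
      + (Z - Z0hat (1 - k)) * ((uc * param k * Z0hat (1 - h)
          + uc ^ 2 * param h * param k * Z1hat (1 - k)) * nuc_sq_sub_one_mul_tc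
        + 10 / 3 * uc ^ 2 * param h * hZ1 + 10 / 3 * uc ^ 2 * param k * Z0hat_one_sub h
        - uc ^ 2 * param h * param k * ofReal_nuc)
      + uc ^ 2 * param h ^ 3 * param k * nuc_sq_sub_one_mul_uc_sq
      - uc ^ 2 * param h * param k * Z0hat (1 - h) * Z1hat (1 - k) * nuc_sq_sub_one_mul_tc
      - 10 / 3 * uc ^ 2 * param h * Z0hat (1 - h) * hZ1
  have hfactored : (-(3 + 3 * h + 3 * h ^ 2 + h ^ 3) * spuriousFactor h k / 9) *
      (zhatDen h k * (Z - Z0hat (1 - h) - Z0hat (1 - k) + 1)) =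
      (-(3 + 3 * h + 3 * h ^ 2 + h ^ 3) * spuriousFactor h k / 9) *
      ((1 - h) * (1 - k) * zhatNum h k / 10) := by
    linear_combination hnormalized + kernel_rhs_eq h k
  have hcancel := mul_left_cancel₀ (div_ne_zero (mul_ne_zero
    (neg_ne_zero.2 (cubic_ne_zero_of_mem_sector hh)) hs) (by norm_num)) hfactored
  unfold Zhat
  field_simp
  linear_combination 10 * hcancel

end FunctionalEquation

section Nonvanishing

variable {h k m : ℂ}

lemma re_mul_self_eq (m : ℂ) : (m * m).re = 2 * m.re ^ 2 - ‖m‖ ^ 2 := by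
  rw [Complex.sq_norm, Complex.normSq_apply, Complex.mul_re]
  ring

lemma half_norm_sq_le_re_mul_self (hk : k ∈ sector) : ‖k‖ ^ 2 / 2 ≤ (k * k).re := by
  rw [Complex.sq_norm, Complex.normSq_apply, Complex.mul_re]
  linarith [hk.2]

lemma neg_half_norm_sq_le_re_mul_self (hm : ‖m‖ ≤ 2 * m.re) : -(‖m‖ ^ 2 / 2) ≤ (m * m).re := by
  rw [re_mul_self_eq]
  linarith [pow_le_pow_left₀ (norm_nonneg m) hm 2]

lemma norm_mul_le_two_mul_re_mul (hh : h ∈ sector) (hk : k ∈ sector) :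
    ‖h * k‖ ≤ 2 * (h * k).re := by
  have hre := re_mul_nonneg hh hk
  have hlower := pow_le_pow_left₀ (mul_nonneg (by norm_num) (mul_nonneg hh.1 hk.1))
    (two_thirds_mul_re_le_re_mul hh hk) 2
  have hnorm : ‖h * k‖ ^ 2 = (h.re ^ 2 + h.im ^ 2) * (k.re ^ 2 + k.im ^ 2) := by
    rw [norm_mul, mul_pow, Complex.sq_norm, Complex.sq_norm, Complex.normSq_apply,
      Complex.normSq_apply]
    ring
  have hupper : (h.re ^ 2 + h.im ^ 2) * (k.re ^ 2 + k.im ^ 2) ≤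
      (4 / 3 * h.re ^ 2) * (4 / 3 * k.re ^ 2) :=
    mul_le_mul (by linarith [hh.2]) (by linarith [hk.2]) (by positivity) (by positivity)
  refine le_of_sq_le_sq ?_ (by positivity)
  rw [hnorm]
  linarith

lemma zhatDen_eq (h k : ℂ) : zhatDen h k = h + k + (h * h + k * k + h * k + h * k * (h * k))
    + (h * h * h + h * h * k + h * k * k + k * k * k) := by
  unfold zhatDen
  ring

lemma re_zhatDen_pos (hh : h ∈ closure paramRegion) (hk : k ∈ closure paramRegion)
    (hne : 0 < h.re + k.re) : 0 < (zhatDen h k).re := by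
  have hhs := closure_paramRegion_subset_sector hh
  have hks := closure_paramRegion_subset_sector hk
  have hmul := norm_mul_le_two_mul_re_mul hhs hks
  have hamgm : 2 * ‖h * k‖ ≤ ‖h‖ ^ 2 + ‖k‖ ^ 2 := by
    rw [norm_mul]
    linarith [two_mul_le_add_sq ‖h‖ ‖k‖]
  have hle_three : ‖h * k‖ ≤ 3 := by linarith [norm_sq_le_three hh, norm_sq_le_three hk]
  have hsq : ‖h * k‖ ^ 2 ≤ 3 * ‖h * k‖ := by
    rw [pow_two]
    exact mul_le_mul_of_nonneg_right hle_three (norm_nonneg _)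
  have hquartic : 0 ≤ (h * h).re + (k * k).re + (h * k).re + (h * k * (h * k)).re := by
    linarith [half_norm_sq_le_re_mul_self hhs, half_norm_sq_le_re_mul_self hks,
      neg_half_norm_sq_le_re_mul_self hmul]
  rw [zhatDen_eq]
  simp only [Complex.add_re]
  linarith [re_mul_mul_nonneg hhs hhs hhs, re_mul_mul_nonneg hhs hhs hks,
    re_mul_mul_nonneg hhs hks hks, re_mul_mul_nonneg hks hks hks]

lemma zhatDen_ne_zero (hh : h ∈ closure paramRegion) (hk : k ∈ closure paramRegion)
    (hne : h ≠ 0 ∨ k ≠ 0) : zhatDen h k ≠ 0 := by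
  have hre {l : ℂ} (hl : l ∈ closure paramRegion) (hl0 : l ≠ 0) : 0 < l.re :=
    (closure_paramRegion_subset_sector hl).1.lt_of_ne
      fun h0 => hl0 (eq_zero_of_mem_sector (closure_paramRegion_subset_sector hl) h0.symm)
  refine fun h0 => (re_zhatDen_pos hh hk ?_).ne' (by rw [h0, Complex.zero_re])
  rcases hne with hne | hne
  · exact add_pos_of_pos_of_nonneg (hre hh hne) (closure_paramRegion_subset_sector hk).1
  · exact add_pos_of_nonneg_of_pos (closure_paramRegion_subset_sector hh).1 (hre hk hne)

lemma one_add_add_sq_ne_zero (hk : k ∈ sector) : 1 + k + k ^ 2 ≠ 0 := fun h0 => by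
  have hre := congrArg Complex.re h0
  rw [pow_two, Complex.add_re, Complex.add_re, Complex.one_re, Complex.zero_re] at hre
  linarith [re_mul_nonneg hk hk, hk.1]

end Nonvanishing

section SingularExpansion

variable {h : ℂ}

lemma Z0hat_one_sub_eq (k : ℂ) : Z0hat (1 - k) = (3 * √7 + 6) / 10
    - (3 * √7 / 10 + 3 / 20) * (1 - param k) + k ^ 4 * ((3 / 2 + 3 * k + k ^ 2) / 10) := by
  rw [Z0hat_one_sub]
  unfold param
  ring

lemma sq_mul_one_sub_mul_zhatNum (h k : ℂ) : (1 + h + h ^ 2) ^ 2 * ((1 - k) * zhatNum h k) =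
    ((1 + h + h ^ 2) * (1 + 2 * h + 3 * h ^ 2)
      - (3 + 9 * h + 9 * h ^ 2 + 7 * h ^ 3 + 2 * h ^ 4) * k ^ 3) * zhatDen h k
    + k ^ 4 * (3 * (1 + h + h ^ 2) * h * param h
      + (3 + 9 * h + 9 * h ^ 2 + 7 * h ^ 3 + 2 * h ^ 4) * k * (1 + h + h ^ 2 + k)) := by
  unfold zhatNum zhatDen param
  ring

/-- At `h = 0` the numerator and the denominator share the factor `k`. -/
lemma exists_analyticOnNhd_remainder (hh : h ∈ closure paramRegion) :
    ∃ g : ℂ → ℂ, AnalyticOnNhd ℂ g (closure paramRegion) ∧ g 0 = 3 * param h ∧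
      ∀ k ∈ closure paramRegion, 3 * (1 + h + h ^ 2) * h * param h
        + (3 + 9 * h + 9 * h ^ 2 + 7 * h ^ 3 + 2 * h ^ 4) * k * (1 + h + h ^ 2 + k) =
          g k * zhatDen h k := by
  rcases eq_or_ne h 0 with rfl | h0
  · refine ⟨fun k => 3 * (1 + k) / (1 + k + k ^ 2), fun k hk => ?_, by norm_num [param],
      fun k hk => ?_⟩
    · exact AnalyticAt.div (by fun_prop) (by fun_prop)
        (one_add_add_sq_ne_zero (closure_paramRegion_subset_sector hk))
    · have hk1 := one_add_add_sq_ne_zero (closure_paramRegion_subset_sector hk)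
      unfold zhatDen param
      field_simp
      ring
  · refine ⟨fun k => (3 * (1 + h + h ^ 2) * h * param h
      + (3 + 9 * h + 9 * h ^ 2 + 7 * h ^ 3 + 2 * h ^ 4) * k * (1 + h + h ^ 2 + k)) / zhatDen h k,
      fun k hk => ?_, ?_, fun k hk => ?_⟩
    · exact AnalyticAt.div (by fun_prop) (by unfold zhatDen; fun_prop)
        (zhatDen_ne_zero hh hk (Or.inl h0))
    · have hh1 := one_add_add_sq_ne_zero (closure_paramRegion_subset_sector hh)
      have hD : zhatDen h 0 = h * (1 + h + h ^ 2) := by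
        unfold zhatDen
        ring
      simp only [hD]
      field_simp
      ring
    · exact (div_mul_cancel₀ _ (zhatDen_ne_zero hh hk (Or.inl h0))).symm

lemma exists_Zhat_eq_add_pow_four_mul (hh : h ∈ closure paramRegion) :
    ∃ (b₀ b₁ : ℂ) (g : ℂ → ℂ), AnalyticOnNhd ℂ g (closure paramRegion) ∧
      g 0 = 3 / 20 * (4 + 2 * h + 3 * h ^ 2) / (1 + h + h ^ 2) ^ 2 ∧
      ∀ k ∈ paramRegion, Zhat h k = b₀ + b₁ * (1 - param k) + k ^ 4 * g k := by
  obtain ⟨g, hg, hg0, hgD⟩ := exists_analyticOnNhd_remainder hh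
  have hE := one_add_add_sq_ne_zero (closure_paramRegion_subset_sector hh)
  set E := 1 + h + h ^ 2 with hEdef
  set p := 3 + 9 * h + 9 * h ^ 2 + 7 * h ^ 3 + 2 * h ^ 4 with hp
  refine ⟨Z0hat (1 - h) - 1 + (3 * √7 + 6) / 10 + (1 - h) * (1 + 2 * h + 3 * h ^ 2) / (10 * E),
    -(3 * √7 / 10 + 3 / 20) - 3 / 20 * ((1 - h) * p / E ^ 2),
    fun k => (3 / 2 + 3 * k + k ^ 2) / 10 + (1 - h) * (g k + p / 2) / (10 * E ^ 2),
    fun k hk => ?_, ?_, fun k hk => ?_⟩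
  · have := hg k hk
    fun_prop
  · simp only [hg0, hp]
    unfold param
    field_simp
    rw [hEdef]
    ring
  · have hD := zhatDen_ne_zero hh (subset_closure hk)
      (Or.inr (ne_zero_of_mem_openSector (paramRegion_subset_openSector hk)))
    have hS : (1 - k) * zhatNum h k =
        ((E * (1 + 2 * h + 3 * h ^ 2) - p * k ^ 3) + k ^ 4 * g k) / E ^ 2 * zhatDen h k := by
      rw [div_mul_eq_mul_div, eq_div_iff (pow_ne_zero 2 hE), add_mul, mul_assoc _ (g k),
        ← hgD k (subset_closure hk), ← sq_mul_one_sub_mul_zhatNum]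
      ring
    have hcube : k ^ 3 = 3 / 2 * (1 - param k) - k ^ 4 / 2 := by
      unfold param
      ring
    rw [Zhat, Z0hat_one_sub_eq k, mul_assoc, hS, hcube]
    field_simp
    ring

end SingularExpansion

section DoubleSeries

open Finset.HasAntidiagonal (antidiagonal mem_antidiagonal)

variable {c : ℕ → ℕ → ℝ} {x y : ℂ}

/-- The double power series with coefficients `c`; it has the junk value `0` at the points where it
does not converge absolutely. -/
noncomputable def doubleSeries (c : ℕ → ℕ → ℝ) (x y : ℂ) : ℂ :=
  ∑' pq : ℕ × ℕ, (c pq.1 pq.2 : ℂ) * x ^ pq.1 * y ^ pq.2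

lemma hasSum_antidiagonal
    (h : Summable fun pq : ℕ × ℕ => (c pq.1 pq.2 : ℂ) * x ^ pq.1 * x ^ pq.2) :
    HasSum (fun n => ((∑ pq ∈ antidiagonal n, c pq.1 pq.2 : ℝ) : ℂ) * x ^ n)
      (doubleSeries c x x) := by
  have hsigma := Finset.HasAntidiagonal.sigmaAntidiagonalEquivProd.hasSum_iff.2 h.hasSum
  refine (hsigma.sigma fun n => hasSum_fintype _).congr_fun fun n => ?_
  rw [Complex.ofReal_sum, Finset.sum_mul, ← Finset.sum_coe_sort]
  refine Finset.sum_congr rfl fun pq _ => ?_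
  rw [Function.comp_apply, Finset.HasAntidiagonal.sigmaAntidiagonalEquivProd_apply, mul_assoc,
    ← pow_add, mem_antidiagonal.1 pq.2]

lemma summable_prod_of_summable_antidiagonal (hc : ∀ p q, 0 ≤ c p q)
    (h : Summable fun n => ∑ pq ∈ antidiagonal n, c pq.1 pq.2) :
    Summable fun pq : ℕ × ℕ => c pq.1 pq.2 := by
  rw [← Finset.HasAntidiagonal.sigmaAntidiagonalEquivProd.summable_iff]
  refine (summable_sigma_of_nonneg fun _ => hc _ _).2 ⟨fun n => (hasSum_fintype _).summable,
    h.congr fun n => ?_⟩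
  rw [tsum_fintype, ← Finset.sum_coe_sort]
  rfl

lemma norm_mul_pow_le {b : ℝ} (hb : 0 ≤ b) (hx : ‖x‖ ≤ 1) (n : ℕ) : ‖(b : ℂ) * x ^ n‖ ≤ b := by
  rw [norm_mul, norm_pow, Complex.norm_of_nonneg hb]
  exact mul_le_of_le_one_right hb (pow_le_one₀ (norm_nonneg x) hx)

lemma norm_mul_pow_mul_pow_le {b : ℝ} (hb : 0 ≤ b) (hx : ‖x‖ ≤ 1) (hy : ‖y‖ ≤ 1) (m n : ℕ) :
    ‖(b : ℂ) * x ^ m * y ^ n‖ ≤ b := by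
  rw [norm_mul, norm_pow]
  exact (mul_le_of_le_one_right (norm_nonneg _) (pow_le_one₀ (norm_nonneg y) hy)).trans
    (norm_mul_pow_le hb hx m)

lemma summable_fiber (hs : Summable fun pq : ℕ × ℕ => c pq.1 pq.2) (q : ℕ) :
    Summable fun p => c p q :=
  hs.comp_injective (i := fun p : ℕ => (p, q)) fun _ _ h => (Prod.ext_iff.1 h).1

lemma hasSum_doubleSeries (hc : ∀ p q, 0 ≤ c p q) (hs : Summable fun pq : ℕ × ℕ => c pq.1 pq.2)
    (hx : ‖x‖ ≤ 1) (hy : ‖y‖ ≤ 1) :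
    HasSum (fun pq : ℕ × ℕ => (c pq.1 pq.2 : ℂ) * x ^ pq.1 * y ^ pq.2) (doubleSeries c x y) :=
  (Summable.of_norm_bounded hs fun pq =>
    norm_mul_pow_mul_pow_le (hc pq.1 pq.2) hx hy pq.1 pq.2).hasSum

lemma hasSum_tsum_mul_pow (hc : ∀ p q, 0 ≤ c p q) (hs : Summable fun pq : ℕ × ℕ => c pq.1 pq.2)
    (hx : ‖x‖ ≤ 1) (hy : ‖y‖ ≤ 1) :
    HasSum (fun q => (∑' p, (c p q : ℂ) * x ^ p) * y ^ q) (doubleSeries c x y) := by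
  refine ((Equiv.prodComm ℕ ℕ).hasSum_iff.2 (hasSum_doubleSeries hc hs hx hy)).prod_fiberwise
    fun q => ?_
  have hq : Summable fun p => (c p q : ℂ) * x ^ p :=
    Summable.of_norm_bounded (summable_fiber hs q) fun p => norm_mul_pow_le (hc p q) hx p
  exact hq.hasSum.mul_right (y ^ q)

lemma differentiableOn_doubleSeries_left (hc : ∀ p q, 0 ≤ c p q)
    (hs : Summable fun pq : ℕ × ℕ => c pq.1 pq.2) (hy : ‖y‖ ≤ 1) :
    DifferentiableOn ℂ (fun x => doubleSeries c x y) (ball 0 1) :=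
  Complex.differentiableOn_tsum_of_summable_norm hs (fun pq => by fun_prop) isOpen_ball
    fun pq _ hx => norm_mul_pow_mul_pow_le (hc _ _) (mem_ball_zero_iff.1 hx).le hy _ _

lemma differentiableOn_doubleSeries_right (hc : ∀ p q, 0 ≤ c p q)
    (hs : Summable fun pq : ℕ × ℕ => c pq.1 pq.2) (hx : ‖x‖ ≤ 1) :
    DifferentiableOn ℂ (fun y => doubleSeries c x y) (ball 0 1) :=
  Complex.differentiableOn_tsum_of_summable_norm hs (fun pq => by fun_prop) isOpen_ball
    fun pq _ hy => norm_mul_pow_mul_pow_le (hc _ _) hx (mem_ball_zero_iff.1 hy).le _ _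

lemma continuousOn_doubleSeries_left (hc : ∀ p q, 0 ≤ c p q)
    (hs : Summable fun pq : ℕ × ℕ => c pq.1 pq.2) (hy : ‖y‖ ≤ 1) :
    ContinuousOn (fun x => doubleSeries c x y) (closedBall 0 1) :=
  continuousOn_tsum (fun pq => by fun_prop) hs
    fun pq _ hx => norm_mul_pow_mul_pow_le (hc _ _) (mem_closedBall_zero_iff.1 hx) hy _ _

end DoubleSeries

section Extension

variable {c : ℕ → ℕ → ℝ} {h k x y : ℂ}

/-- `c` is, near the origin, the coefficient sequence of a solution of the functional equation in
the normalized variables: its double series is given by `Zhat` wherever the spurious factor of the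
kernel does not vanish. -/
def IsZhatExpansion (c : ℕ → ℕ → ℝ) : Prop :=
  ∀ᶠ p : ℂ × ℂ in 𝓝 0,
    Summable (fun pq : ℕ × ℕ => (c pq.1 pq.2 : ℂ) * p.1 ^ pq.1 * p.2 ^ pq.2) ∧
    (spuriousFactor (paramInv p.1) (paramInv p.2) ≠ 0 →
      doubleSeries c p.1 p.2 = Zhat (paramInv p.1) (paramInv p.2))

/-- The restriction of `Zhat` to the diagonal, with the common factor of numerator and denominator
removed. -/
noncomputable def zhatDiag (k : ℂ) : ℂ :=
  2 * Z0hat (1 - k) - 1 + (1 - k) ^ 2 *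
    ((2 - k) + 2 * k * (2 - k) ^ 2 + 16 * k ^ 2 + k ^ 2 * (2 + k) ^ 3) /
      (10 * (2 + 3 * k + 4 * k ^ 2 + k ^ 3))

lemma spuriousFactor_self (k : ℂ) : spuriousFactor k k = (1 - k) * k ^ 2 := by
  unfold spuriousFactor
  ring

lemma Zhat_self (hk : k ≠ 0) : Zhat k k = zhatDiag k := by
  have hnum : (1 - k) * (1 - k) * zhatNum k k = k * ((1 - k) ^ 2 *
      ((2 - k) + 2 * k * (2 - k) ^ 2 + 16 * k ^ 2 + k ^ 2 * (2 + k) ^ 3)) := by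
    unfold zhatNum
    ring
  have hden : 10 * zhatDen k k = k * (10 * (2 + 3 * k + 4 * k ^ 2 + k ^ 3)) := by
    unfold zhatDen
    ring
  rw [Zhat, hnum, hden, mul_div_mul_left _ _ hk, zhatDiag, two_mul (Z0hat _)]

lemma analyticOnNhd_zhatDiag : AnalyticOnNhd ℂ zhatDiag (closure paramRegion) := by
  intro k hk
  have hks := closure_paramRegion_subset_sector hk
  have hden : 2 + 3 * k + 4 * k ^ 2 + k ^ 3 ≠ 0 := fun h0 => by
    have hre := congrArg Complex.re h0
    rw [pow_succ k 2, pow_two, ← Complex.ofReal_ofNat, ← Complex.ofReal_ofNat,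
      ← Complex.ofReal_ofNat, Complex.add_re, Complex.add_re, Complex.add_re,
      Complex.re_ofReal_mul, Complex.re_ofReal_mul, Complex.ofReal_re, Complex.zero_re] at hre
    linarith [re_mul_nonneg hks hks, re_mul_mul_nonneg hks hks hks, hks.1]
  unfold zhatDiag Z0hat
  have := mul_ne_zero (by norm_num : (10 : ℂ) ≠ 0) hden
  fun_prop (disch := assumption)

lemma paramInv_ne_one (hx : x ∈ ball (0 : ℂ) 1) (hx0 : x ≠ 0) : paramInv x ≠ 1 := fun h => by
  rw [← param_paramInv hx, h, param_one] at hx0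
  exact hx0 rfl

/-- By positivity it suffices to bound the partial sums on the diagonal, where `zhatDiag` is
bounded. -/
lemma IsZhatExpansion.summable (h : IsZhatExpansion c) (hc : ∀ p q, 0 ≤ c p q) :
    Summable fun pq : ℕ × ℕ => c pq.1 pq.2 := by
  obtain ⟨M, hM⟩ := exists_norm_le_of_analyticOnNhd analyticOnNhd_zhatDiag
  have hdiff := differentiableOn_comp_paramInv_of_analyticOnNhd analyticOnNhd_zhatDiag
  have hball : ball (0 : ℂ) 1 ∈ 𝓝 0 := ball_mem_nhds 0 one_pos
  have hdiag : Tendsto (fun x : ℂ => (x, x)) (𝓝 0) (𝓝 0) :=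
    (continuous_id.prodMk continuous_id).tendsto' 0 0 rfl
  have hsum := eventually_hasSum_of_eventually_nhdsNE
    (c := fun n => ((∑ pq ∈ Finset.HasAntidiagonal.antidiagonal n, c pq.1 pq.2 : ℝ) : ℂ))
    (hdiff.differentiableAt hball).continuousAt <| by
      filter_upwards [self_mem_nhdsWithin, nhdsWithin_le_nhds hball,
        nhdsWithin_le_nhds (hdiag.eventually h)] with x hx0 hx ⟨hsum, heq⟩
      have hk0 := ne_zero_of_mem_openSector (paramRegion_subset_openSector (paramInv_mem hx))
      rw [← Zhat_self hk0, ← heq]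
      · exact hasSum_antidiagonal hsum
      · rw [spuriousFactor_self]
        exact mul_ne_zero (sub_ne_zero.2 (paramInv_ne_one hx hx0).symm) (pow_ne_zero 2 hk0)
  refine summable_prod_of_summable_antidiagonal hc ?_
  simpa using summable_mul_pow_of_bounded one_pos hdiff
    (fun x hx => hM _ (subset_closure (paramInv_mem hx)))
    (fun n => Finset.sum_nonneg fun _ _ => hc _ _) hsum

lemma eqOn_ball_of_frequently_eq {f g : ℂ → ℂ} {r : ℝ} (hr : 0 < r)
    (hf : DifferentiableOn ℂ f (ball 0 r)) (hg : DifferentiableOn ℂ g (ball 0 r))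
    (h : ∃ᶠ x in 𝓝[≠] (0 : ℂ), f x = g x) : Set.EqOn f g (ball 0 r) :=
  (hf.analyticOnNhd isOpen_ball).eqOn_of_preconnected_of_frequently_eq
    (hg.analyticOnNhd isOpen_ball) (convex_ball 0 r).isPreconnected (mem_ball_self hr) h

lemma differentiableAt_Zhat (hD : zhatDen h k ≠ 0) :
    DifferentiableAt ℂ (fun p : ℂ × ℂ => Zhat p.1 p.2) (h, k) := by
  have hden : 10 * zhatDen h k ≠ 0 := mul_ne_zero (by norm_num) hD
  unfold Zhat Z0hat zhatNum
  unfold zhatDen at *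
  fun_prop (disch := assumption)

lemma continuousAt_spuriousFactor_paramInv (h : ℂ) (hy : y ∈ ball (0 : ℂ) 1) :
    ContinuousAt (fun y => spuriousFactor h (paramInv y)) y := by
  have := continuousAt_paramInv hy
  unfold spuriousFactor
  fun_prop

lemma spuriousFactor_one_right (h : ℂ) : spuriousFactor h 1 = (1 - h) ^ 2 := by
  unfold spuriousFactor
  ring

lemma zhatDen_paramInv_ne_zero (hh : h ∈ closure paramRegion) (hy : y ∈ ball (0 : ℂ) 1) :
    zhatDen h (paramInv y) ≠ 0 :=
  zhatDen_ne_zero hh (subset_closure (paramInv_mem hy))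
    (Or.inr (ne_zero_of_mem_openSector (paramRegion_subset_openSector (paramInv_mem hy))))

lemma differentiableOn_Zhat_paramInv_left (hy : y ∈ ball (0 : ℂ) 1) :
    DifferentiableOn ℂ (fun x => Zhat (paramInv x) (paramInv y)) (ball 0 1) := fun x hx =>
  ((differentiableAt_Zhat
    (zhatDen_paramInv_ne_zero (subset_closure (paramInv_mem hx)) hy)).comp
      (f := fun x => (paramInv x, paramInv y)) x
      ((hasDerivAt_paramInv hx).differentiableAt.prodMk
        (differentiableAt_const _))).differentiableWithinAt

lemma differentiableOn_Zhat_paramInv_right (hx : x ∈ ball (0 : ℂ) 1) :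
    DifferentiableOn ℂ (fun y => Zhat (paramInv x) (paramInv y)) (ball 0 1) := fun y hy =>
  ((differentiableAt_Zhat
    (zhatDen_paramInv_ne_zero (subset_closure (paramInv_mem hx)) hy)).comp
      (f := fun y => (paramInv x, paramInv y)) y
      ((differentiableAt_const _).prodMk
        (hasDerivAt_paramInv hy).differentiableAt)).differentiableWithinAt

/-- For small `x ≠ 0` the spurious factor does not vanish at `y = 0`, which gives the identity for
these `x` and all `y`, and then for all `x`. -/
lemma IsZhatExpansion.doubleSeries_eq (h : IsZhatExpansion c) (hc : ∀ p q, 0 ≤ c p q)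
    (hx : x ∈ ball (0 : ℂ) 1) (hy : y ∈ ball (0 : ℂ) 1) :
    doubleSeries c x y = Zhat (paramInv x) (paramInv y) := by
  have hs := h.summable hc
  have hsmall : ∀ᶠ x in 𝓝[≠] (0 : ℂ), ∀ y ∈ ball (0 : ℂ) 1,
      doubleSeries c x y = Zhat (paramInv x) (paramInv y) := by
    filter_upwards [self_mem_nhdsWithin, nhdsWithin_le_nhds (ball_mem_nhds 0 one_pos),
      nhdsWithin_le_nhds (Eventually.curry_nhds h)] with x hx0 hx hev
    have hspur : ∀ᶠ y in 𝓝 (0 : ℂ), spuriousFactor (paramInv x) (paramInv y) ≠ 0 := by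
      refine (continuousAt_spuriousFactor_paramInv _ (mem_ball_self one_pos)).eventually_ne ?_
      rw [paramInv_zero, spuriousFactor_one_right]
      exact pow_ne_zero 2 (sub_ne_zero.2 (paramInv_ne_one hx hx0).symm)
    refine eqOn_ball_of_frequently_eq one_pos
      (differentiableOn_doubleSeries_right hc hs (mem_ball_zero_iff.1 hx).le)
      (differentiableOn_Zhat_paramInv_right hx)
      (Eventually.frequently (nhdsWithin_le_nhds ?_))
    filter_upwards [hev, hspur] with y hy hne using hy.2 hne
  exact eqOn_ball_of_frequently_eq one_pos
    (differentiableOn_doubleSeries_left hc hs (mem_ball_zero_iff.1 hy).le)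
    (differentiableOn_Zhat_paramInv_left hy)
    (hsmall.mono fun x hx => hx y hy).frequently hx

lemma IsZhatExpansion.doubleSeries_param_eq (h : IsZhatExpansion c) (hc : ∀ p q, 0 ≤ c p q)
    (hk : k ∈ closure paramRegion) (hy : y ∈ ball (0 : ℂ) 1) :
    doubleSeries c (param k) y = Zhat k (paramInv y) := by
  refine Set.EqOn.of_subset_closure (s := paramRegion) (f := fun k => doubleSeries c (param k) y)
    (g := fun k => Zhat k (paramInv y)) (fun k hk => ?_) ?_ (fun k hk => ?_) subset_closure
    subset_rfl hk
  · simp only [h.doubleSeries_eq hc (param_mem_ball hk) hy, paramInv_param hk]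
  · exact (continuousOn_doubleSeries_left hc (h.summable hc) (mem_ball_zero_iff.1 hy).le).comp
      continuous_param.continuousOn fun k hk => mem_closedBall_zero_iff.2 (norm_param_le_one hk)
  · exact ((differentiableAt_Zhat (zhatDen_paramInv_ne_zero hk hy)).continuousAt.comp
      (f := fun k => (k, paramInv y)) (by fun_prop)).continuousWithinAt

end Extension

section Amplitude

variable {h k x : ℂ} {α : ℕ → ℝ}

lemma Ahat_one_sub (k : ℂ) : Ahat (1 - k) =
    1 / 10 * (((3 / 2 : ℝ) ^ (7 / 3 : ℝ) : ℝ) : ℂ) * (4 + 2 * k + 3 * k ^ 2)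
      / (1 + k + k ^ 2) ^ 2 := by
  unfold Ahat
  congr 1 <;> ring

lemma four_add_two_mul_add_three_mul_sq_ne_zero (hk : k ∈ sector) :
    4 + 2 * k + 3 * k ^ 2 ≠ 0 := fun h0 => by
  have hre := congrArg Complex.re h0
  rw [pow_two, ← Complex.ofReal_ofNat, ← Complex.ofReal_ofNat, ← Complex.ofReal_ofNat,
    Complex.add_re, Complex.add_re, Complex.re_ofReal_mul, Complex.re_ofReal_mul,
    Complex.ofReal_re, Complex.zero_re] at hre
  linarith [re_mul_nonneg hk hk, hk.1]

lemma Ahat_one_sub_ne_zero (hk : k ∈ sector) : Ahat (1 - k) ≠ 0 := by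
  have hpow : (((3 / 2 : ℝ) ^ (7 / 3 : ℝ) : ℝ) : ℂ) ≠ 0 :=
    Complex.ofReal_ne_zero.2 (Real.rpow_pos_of_pos (by norm_num) _).ne'
  rw [Ahat_one_sub]
  exact div_ne_zero (mul_ne_zero (mul_ne_zero (by norm_num) hpow)
    (four_add_two_mul_add_three_mul_sq_ne_zero hk)) (pow_ne_zero 2 (one_add_add_sq_ne_zero hk))

lemma analyticOnNhd_Ahat_one_sub :
    AnalyticOnNhd ℂ (fun k => Ahat (1 - k)) (closure paramRegion) := fun k hk => by
  have hden := pow_ne_zero 2 (one_add_add_sq_ne_zero (closure_paramRegion_subset_sector hk))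
  simp only [Ahat_one_sub]
  fun_prop (disch := assumption)

lemma rpow_mul_cubeRootFactor_zero_pow_four :
    (((3 / 2 : ℝ) ^ (7 / 3 : ℝ) : ℝ) : ℂ) * cubeRootFactor 0 ^ 4 = 3 / 2 := by
  have hroot : cubeRootFactor 0 = ((((3 / 2 : ℝ) ^ (-1 / 3 : ℝ) : ℝ)) : ℂ) := by
    rw [neg_div, Real.rpow_neg (by norm_num), ← Real.inv_rpow (by norm_num), cubeRootFactor,
      Complex.ofReal_cpow (by norm_num)]
    norm_num
  rw [hroot, ← Complex.ofReal_pow, ← Complex.ofReal_mul, ← Real.rpow_mul_natCast (by norm_num),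
    ← Real.rpow_add (by norm_num)]
  norm_num

lemma singular_coeff_div_eq_Ahat (h : ℂ) :
    3 / 20 * (4 + 2 * h + 3 * h ^ 2) / (1 + h + h ^ 2) ^ 2 / cubeRootFactor 0 ^ 4 =
      Ahat (1 - h) := by
  have hroot := rpow_mul_cubeRootFactor_zero_pow_four
  have hne : cubeRootFactor 0 ^ 4 ≠ 0 := fun h0 => by norm_num [h0] at hroot
  rw [Ahat_one_sub, div_eq_iff hne]
  linear_combination (-(1 / 10) * (4 + 2 * h + 3 * h ^ 2) / (1 + h + h ^ 2) ^ 2) * hroot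

lemma summable_of_hasSum_Ahat (hα : ∀ n, 0 ≤ α n)
    (h : ∀ᶠ x in 𝓝 (0 : ℂ), HasSum (fun n => (α n : ℂ) * x ^ n) (Ahat (1 - paramInv x))) :
    Summable α := by
  obtain ⟨M, hM⟩ := exists_norm_le_of_analyticOnNhd analyticOnNhd_Ahat_one_sub
  simpa only [one_pow, mul_one] using summable_mul_pow_of_bounded one_pos
    (differentiableOn_comp_paramInv_of_analyticOnNhd analyticOnNhd_Ahat_one_sub)
    (fun x hx => hM _ (subset_closure (paramInv_mem hx))) hα h

lemma tsum_mul_param_pow_eq_Ahat (hα : ∀ n, 0 ≤ α n)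
    (h : ∀ᶠ x in 𝓝 (0 : ℂ), HasSum (fun n => (α n : ℂ) * x ^ n) (Ahat (1 - paramInv x)))
    (hk : k ∈ closure paramRegion) : ∑' n, (α n : ℂ) * param k ^ n = Ahat (1 - k) := by
  have hdiff := differentiableOn_comp_paramInv_of_analyticOnNhd analyticOnNhd_Ahat_one_sub
  have hcont : ContinuousOn (fun x : ℂ => ∑' n, (α n : ℂ) * x ^ n) (closedBall 0 1) :=
    continuousOn_tsum (fun n => by fun_prop) (summable_of_hasSum_Ahat hα h)
      fun n x hx => norm_mul_pow_le (hα n) (mem_closedBall_zero_iff.1 hx) n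
  refine Set.EqOn.of_subset_closure (s := paramRegion)
    (f := fun k => ∑' n, (α n : ℂ) * param k ^ n) (g := fun k => Ahat (1 - k)) (fun k hk => ?_)
    (hcont.comp continuous_param.continuousOn
      fun k hk => mem_closedBall_zero_iff.2 (norm_param_le_one hk))
    analyticOnNhd_Ahat_one_sub.continuousOn subset_closure subset_rfl hk
  have hsum := hasSum_taylorCoeff hdiff (param_mem_ball hk)
  simpa only [taylorCoeff_eq_of_hasSum h, paramInv_param hk] using hsum.tsum_eq

end Amplitude

section CoefficientAsymptotics

variable {c : ℕ → ℕ → ℝ} {h : ℂ}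

lemma taylorCoeff_add_mul_one_sub_of_two_le (b₀ b₁ : ℂ) {n : ℕ} (hn : 2 ≤ n) :
    taylorCoeff (fun y => b₀ + b₁ * (1 - y)) n = 0 := by
  obtain ⟨n, rfl⟩ := Nat.exists_eq_add_of_le' hn
  have hderiv : deriv (fun y => b₀ + b₁ * (1 - y)) = fun _ => -b₁ := by
    funext y
    simp
  rw [taylorCoeff, iteratedDeriv_succ', iteratedDeriv_succ', hderiv, deriv_const',
    iteratedDeriv_const]
  simp

lemma IsZhatExpansion.tendsto_rpow_mul_tsum (H : IsZhatExpansion c) (hc : ∀ p q, 0 ≤ c p q)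
    (hh : h ∈ closure paramRegion) :
    Tendsto (fun q : ℕ => (((q : ℝ) ^ (7 / 3 : ℝ) : ℝ) : ℂ) * ∑' p, (c p q : ℂ) * param h ^ p)
      atTop (𝓝 (Ahat (1 - h) / (Real.Gamma (-4 / 3) : ℂ))) := by
  obtain ⟨b₀, b₁, g, hg, hg0, hexp⟩ := exists_Zhat_eq_add_pow_four_mul hh
  have hball : ball (0 : ℂ) 1 ∈ 𝓝 0 := ball_mem_nhds 0 one_pos
  have hcoeff : taylorCoeff (fun y => b₀ + b₁ * (1 - y) + paramInv y ^ 4 * g (paramInv y)) =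
      fun q => ∑' p, (c p q : ℂ) * param h ^ p := by
    refine taylorCoeff_eq_of_hasSum ?_
    filter_upwards [hball] with y hy
    have hsum := hasSum_tsum_mul_pow hc (H.summable hc) (norm_param_le_one hh)
      (mem_ball_zero_iff.1 hy).le
    rwa [H.doubleSeries_param_eq hc hh hy, hexp _ (paramInv_mem hy), param_paramInv hy] at hsum
  have hsing : AnalyticAt ℂ (fun y => paramInv y ^ 4 * g (paramInv y)) 0 :=
    (differentiableOn_comp_paramInv_of_analyticOnNhd
      ((analyticOnNhd_id.pow 4).mul hg)).analyticAt hball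
  have hlim := tendsto_rpow_mul_taylorCoeff_pow_mul 4 hg
  rw [hg0, singular_coeff_div_eq_Ahat, Complex.ofReal_inv, ← div_eq_mul_inv,
    show -(((4 : ℕ) : ℝ) / 3) = -4 / 3 by norm_num,
    show ((4 : ℕ) : ℝ) / 3 + 1 = 7 / 3 by norm_num] at hlim
  refine hlim.congr' ?_
  filter_upwards [eventually_ge_atTop 2] with q hq
  rw [← congrFun hcoeff q, taylorCoeff_add (by fun_prop) hsing,
    taylorCoeff_add_mul_one_sub_of_two_le _ _ hq, zero_add]

lemma isEquivalent_of_tendsto_rpow_mul {f : ℕ → ℂ} {C R : ℂ} {s : ℝ} (hC : C ≠ 0) (hR : R ≠ 0)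
    (h : Tendsto (fun q : ℕ => (((q : ℝ) ^ s : ℝ) : ℂ) * (R ^ q * f q)) atTop (𝓝 C)) :
    f ~[atTop] fun q : ℕ => C * (R ^ q)⁻¹ * (((q : ℝ) ^ (-s) : ℝ) : ℂ) := by
  have hne : ∀ᶠ q : ℕ in atTop, (((q : ℝ) ^ s : ℝ) : ℂ) ≠ 0 := by
    filter_upwards [eventually_gt_atTop 0] with q hq
    exact Complex.ofReal_ne_zero.2 (Real.rpow_pos_of_pos (by exact_mod_cast hq) s).ne'
  have hneg : ∀ q : ℕ, (((q : ℝ) ^ (-s) : ℝ) : ℂ) = (((q : ℝ) ^ s : ℝ) : ℂ)⁻¹ := fun q => by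
    rw [Real.rpow_neg (Nat.cast_nonneg q), Complex.ofReal_inv]
  have hequiv := ((isEquivalent_const_iff_tendsto hC).2 h).mul
    (IsEquivalent.refl (u := fun q : ℕ => (R ^ q)⁻¹ * (((q : ℝ) ^ (-s) : ℝ) : ℂ)))
  refine (hequiv.congr_left ?_).congr_right ?_
  · filter_upwards [hne] with q hq
    have hRq := pow_ne_zero q hR
    simp only [Pi.mul_apply, hneg]
    field_simp
  · exact Eventually.of_forall fun q => (mul_assoc _ _ _).symm

lemma Gamma_neg_four_thirds_ne_zero : Real.Gamma (-4 / 3) ≠ 0 :=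
  Real.Gamma_ne_zero fun m hm => by
    have h3 : ((3 * m : ℕ) : ℝ) = (4 : ℕ) := by push_cast; linarith
    have := Nat.cast_injective h3
    lia

end CoefficientAsymptotics

section Rescaling

variable {ρ : ℝ} {z : ℕ → ℕ → ℝ} {a : ℕ → ℝ} {u x : ℂ}

lemma exists_uc_mul_param_eq (hu : ‖u‖ ≤ uc) : ∃ h ∈ closure paramRegion, uc * param h = u := by
  have huc : (uc : ℂ) ≠ 0 := by exact_mod_cast uc_pos.ne'
  obtain ⟨h, hh, hparam⟩ := closedBall_subset_image_closure_paramRegion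
    (show u / uc ∈ closedBall (0 : ℂ) 1 by
      rw [mem_closedBall_zero_iff, norm_div, Complex.norm_of_nonneg uc_pos.le]
      exact (div_le_one uc_pos).2 hu)
  exact ⟨h, hh, by rw [hparam, mul_div_cancel₀ u huc]⟩

lemma summable_norm_mul_pow {b : ℕ → ℝ} {r : ℝ} (hb : ∀ n, 0 ≤ b n)
    (hs : Summable fun n => b n * r ^ n) (hu : ‖u‖ ≤ r) :
    Summable fun n => ‖(b n : ℂ) * u ^ n‖ :=
  hs.of_nonneg_of_le (fun _ => norm_nonneg _) fun n => by
    rw [norm_mul, norm_pow, Complex.norm_of_nonneg (hb n)]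
    exact mul_le_mul_of_nonneg_left (pow_le_pow_left₀ (norm_nonneg u) hu n) (hb n)

lemma eventually_norm_one_sub_paramInv_lt (hρ : 0 < ρ) :
    ∀ᶠ x in 𝓝 (0 : ℂ), ‖1 - paramInv x‖ < ρ := by
  have hcont : ContinuousAt (fun x => ‖1 - paramInv x‖) 0 :=
    (continuousAt_const.sub (continuousAt_paramInv (mem_ball_self one_pos))).norm
  exact hcont.eventually_lt continuousAt_const (by rwa [paramInv_zero, sub_self, norm_zero])

lemma uhat_one_sub_paramInv (hx : x ∈ ball (0 : ℂ) 1) : uhat (1 - paramInv x) = uc * x := by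
  rw [uhat_one_sub, param_paramInv hx]

lemma ofReal_mul_uc_pow_mul_pow (b : ℝ) (x : ℂ) (n : ℕ) :
    ((b * uc ^ n : ℝ) : ℂ) * x ^ n = b * (uc * x) ^ n := by
  push_cast
  ring

/-- The coefficients of the double series in the variables `u / uc` and `v / uc`. -/
noncomputable def normalizedCoeff (z : ℕ → ℕ → ℝ) (p q : ℕ) : ℝ := z p q * uc ^ p * uc ^ q

lemma normalizedCoeff_nonneg (hz : ∀ p q, 0 ≤ z p q) (p q : ℕ) : 0 ≤ normalizedCoeff z p q :=
  mul_nonneg (mul_nonneg (hz p q) (pow_nonneg uc_pos.le p)) (pow_nonneg uc_pos.le q)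

lemma summable_mul_uc_pow (hs : Summable fun pq : ℕ × ℕ => normalizedCoeff z pq.1 pq.2) (q : ℕ) :
    Summable fun p => z p q * uc ^ p :=
  (summable_mul_right_iff (pow_pos uc_pos q).ne').1 (summable_fiber hs q)

lemma tsum_normalizedCoeff_mul_pow (z : ℕ → ℕ → ℝ) (x : ℂ) (q : ℕ) :
    ∑' p, (normalizedCoeff z p q : ℂ) * x ^ p =
      (uc : ℂ) ^ q * ∑' p, (z p q : ℂ) * (uc * x) ^ p := by
  rw [← tsum_mul_left]
  refine tsum_congr fun p => ?_
  rw [normalizedCoeff]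
  push_cast
  ring

lemma isZhatExpansion_normalizedCoeff (hρ : 0 < ρ)
    (hZ : ∀ H K : ℂ, ‖H‖ < ρ → ‖K‖ < ρ → ∃ Z : ℂ,
      HasSum (fun pq : ℕ × ℕ => (z pq.1 pq.2 : ℂ) * uhat H ^ pq.1 * uhat K ^ pq.2) Z ∧
      ((nuc : ℂ) * uhat K * uhat H - uhat H ^ 2
          - ((nuc : ℂ) ^ 2 - 1) * (tc : ℂ) * uhat K * (Z0hat H + uhat H * Z1hat K))
          * (Z - Z0hat K)
        = uhat H ^ 2 * (Z0hat K - Z0hat H)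
          + ((nuc : ℂ) ^ 2 - 1) * uhat H * uhat K
            * (uhat H ^ 2 - (tc : ℂ) * Z0hat H * Z1hat K)) :
    IsZhatExpansion (normalizedCoeff z) := by
  have hnear : ∀ᶠ x in 𝓝 (0 : ℂ), x ∈ ball (0 : ℂ) 1 ∧ ‖1 - paramInv x‖ < ρ :=
    (isOpen_ball.eventually_mem (mem_ball_self one_pos)).and
      (eventually_norm_one_sub_paramInv_lt hρ)
  filter_upwards [hnear.prod_nhds hnear] with ⟨x, y⟩ ⟨⟨hx, hxρ⟩, ⟨hy, hyρ⟩⟩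
  obtain ⟨Z, hsum, hfun⟩ := hZ _ _ hxρ hyρ
  have hnorm : HasSum (fun pq : ℕ × ℕ =>
      (normalizedCoeff z pq.1 pq.2 : ℂ) * x ^ pq.1 * y ^ pq.2) Z := by
    refine hsum.congr_fun fun pq => ?_
    rw [uhat_one_sub_paramInv hx, uhat_one_sub_paramInv hy, normalizedCoeff]
    push_cast
    ring
  have hxcl := subset_closure (paramInv_mem hx)
  have hycl := subset_closure (paramInv_mem hy)
  exact ⟨hnorm.summable, fun hs => hnorm.tsum_eq.trans <| eq_Zhat_of_functional_equation
    (closure_paramRegion_subset_sector hxcl) (closure_paramRegion_subset_sector hycl) hs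
    (zhatDen_paramInv_ne_zero hxcl hy) hfun⟩

lemma eventually_hasSum_Ahat_paramInv (hρ : 0 < ρ)
    (hA : ∀ H : ℂ, ‖H‖ < ρ → HasSum (fun p : ℕ => (a p : ℂ) * uhat H ^ p) (Ahat H)) :
    ∀ᶠ x in 𝓝 (0 : ℂ),
      HasSum (fun p => ((a p * uc ^ p : ℝ) : ℂ) * x ^ p) (Ahat (1 - paramInv x)) := by
  filter_upwards [ball_mem_nhds (0 : ℂ) one_pos,
    eventually_norm_one_sub_paramInv_lt hρ] with x hx hxρ
  simpa only [ofReal_mul_uc_pow_mul_pow, uhat_one_sub_paramInv hx] using hA _ hxρ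

end Rescaling

/-- for `|u| ≤ u_c`, the series `Z_q(u) = Σ_p z_{p,q} u^p` and
`A(u) = Σ_p a_p u^p` converge absolutely, and `Z_q(u) ~ (A(u)/Γ(−4/3)) u_c^{−q} q^{−7/3}`
as `q → ∞`. -/
theorem statement2
    (ρ : ℝ) (hρ : 0 < ρ)
    (z : ℕ → ℕ → ℝ) (hz_nonneg : ∀ p q, 0 ≤ z p q)
    -- `z p 0` are the Taylor coefficients of `Z₀ = Ẑ₀ ∘ û⁻¹` at `0`
    (hz0 : ∀ H : ℂ, ‖H‖ < ρ →
      HasSum (fun p : ℕ => (z p 0 : ℂ) * uhat H ^ p) (Z0hat H))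
    -- `z p q` are the Taylor coefficients at `(0,0)` of the solution `Z(u,v)` of the
    -- algebraic equation, expressed through the parametrization `u = û(H)`, `v = û(K)`
    (hZ : ∀ H K : ℂ, ‖H‖ < ρ → ‖K‖ < ρ → ∃ ZHK : ℂ,
      HasSum (fun pq : ℕ × ℕ => (z pq.1 pq.2 : ℂ) * uhat H ^ pq.1 * uhat K ^ pq.2) ZHK ∧
      ((nuc : ℂ) * uhat K * uhat H - uhat H ^ 2
          - ((nuc : ℂ) ^ 2 - 1) * (tc : ℂ) * uhat K * (Z0hat H + uhat H * Z1hat K))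
          * (ZHK - Z0hat K)
        = uhat H ^ 2 * (Z0hat K - Z0hat H)
          + ((nuc : ℂ) ^ 2 - 1) * uhat H * uhat K * (uhat H ^ 2 - (tc : ℂ) * Z0hat H * Z1hat K))
    (a : ℕ → ℝ) (ha_pos : ∀ p, 0 < a p)
    -- `a p` are the Taylor coefficients of `A = Â ∘ û⁻¹` at `0`
    (hA : ∀ H : ℂ, ‖H‖ < ρ →
      HasSum (fun p : ℕ => (a p : ℂ) * uhat H ^ p) (Ahat H))
    :
    ∀ u : ℂ, ‖u‖ ≤ uc →
      (∀ q : ℕ, Summable (fun p : ℕ => ‖(z p q : ℂ) * u ^ p‖)) ∧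
      Summable (fun p : ℕ => ‖(a p : ℂ) * u ^ p‖) ∧
      Asymptotics.IsEquivalent Filter.atTop
        (fun q : ℕ => ∑' p : ℕ, (z p q : ℂ) * u ^ p)
        (fun q : ℕ => ((∑' p : ℕ, (a p : ℂ) * u ^ p) / (Real.Gamma (-4/3) : ℂ))
          * (((uc : ℂ)) ^ q)⁻¹ * (((q : ℝ) ^ (-(7:ℝ)/3) : ℝ) : ℂ)) := by
  intro u hu
  have hc := normalizedCoeff_nonneg hz_nonneg
  have hexp := isZhatExpansion_normalizedCoeff hρ hZ
  have haexp := eventually_hasSum_Ahat_paramInv hρ hA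
  have ha : ∀ p, 0 ≤ a p * uc ^ p := fun p => mul_nonneg (ha_pos p).le (pow_nonneg uc_pos.le p)
  refine ⟨fun q => summable_norm_mul_pow (hz_nonneg · q)
      (summable_mul_uc_pow (hexp.summable hc) q) hu,
    summable_norm_mul_pow (fun p => (ha_pos p).le) (summable_of_hasSum_Ahat ha haexp) hu, ?_⟩
  obtain ⟨h, hh, rfl⟩ := exists_uc_mul_param_eq hu
  have hA_eq : ∑' p, (a p : ℂ) * (uc * param h) ^ p = Ahat (1 - h) := by
    simpa only [ofReal_mul_uc_pow_mul_pow] using tsum_mul_param_pow_eq_Ahat ha haexp hh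
  have hlim := hexp.tendsto_rpow_mul_tsum hc hh
  simp only [tsum_normalizedCoeff_mul_pow] at hlim
  rw [hA_eq, neg_div (3 : ℝ) 7]
  exact isEquivalent_of_tendsto_rpow_mul
    (div_ne_zero (Ahat_one_sub_ne_zero (closure_paramRegion_subset_sector hh))
      (Complex.ofReal_ne_zero.2 Gamma_neg_four_thirds_ne_zero))
    (Complex.ofReal_ne_zero.2 uc_pos.ne') hlim
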